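/- arXiv:2103.10288 — 2 statements merged into one kernel-verified Lean document; each statement's English description precedes it below -/
import Mathlib

section
/- Let 1 < p, q, s < ∞. The pair of real Banach spaces (ℓ_s ⊕_p ℓ_p, ℓ_s ⊕_q ℓ_q) has the weak maximizing property if and only if p ≤ s ≤ q. -/
/-!
The proof rests on how the norm of `ℓ_s ⊕_r ℓ_r` behaves under adding a weakly null sequence. If
`w n → 0` weakly, then up to a small error `y` and `w n` live on disjoint blocks of coordinates,
and Minkowski's inequality in dimension two (`pairNorm_exchange`) gives
`‖y + w n‖ ^ s ≤ ‖y‖ ^ s + ‖w n‖ ^ s + o(1)` if `s ≤ r` (`cutSum_upper`, `asymp_upper`), and the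
reverse inequality with `- o(1)` if `r ≤ s` (`cutSum_lower`, `asymp_lower`).

Suppose `p ≤ s ≤ q`. A maximizing sequence `x n` of `T` that is not weakly null has, along a
subsequence, a weak limit `x₀ ≠ 0`. Put `w n = x n - x₀` and `M = lim ‖w n‖`. The lower estimate
in the domain gives `‖x₀‖ ^ s + M ^ s ≤ 1`, and the upper estimate in the codomain gives
`‖T‖ ^ s ≤ ‖T x₀‖ ^ s + ‖T‖ ^ s * M ^ s`. Together they yield `‖T x₀‖ = ‖T‖ * ‖x₀‖`, so `T` attains
its norm at `x₀ / ‖x₀‖` (`wmp_of_le`). Weak convergence is handled through coordinates: since the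
exponents exceed `1`, bounded coordinatewise null sequences are weakly null
(`ellSeq_weaklyNull`).

Otherwise let `D` be the diagonal operator with weights `i / (i + 1)` (`dampOp`). It has norm `1`
but strictly decreases the norm of every nonzero vector. If `s < p`, take
`T (u, b) = (b₀ e₀ + D u, 0)` (`not_wmp_of_lt_left`); if `q < s`, take `T (u, b) = (D u, u₀ e₀)`
(`not_wmp_of_lt_right`). In both cases `T` has the norm `2 ^ (1 / r - 1 / t)` of the identity from
the two-dimensional `ℓ_t` to the two-dimensional `ℓ_r`, where `r < t` are the two exponents
compared. This norm is approached along vectors with a fixed nonzero coordinate, but attaining it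
would need a nonzero vector whose norm `D` preserves (`not_wmp_of_pairNorm`).
-/

open Filter Topology

/-- `x` is a maximizing sequence for the bounded operator `T`: a sequence of unit
vectors with `‖T (x n)‖ → ‖T‖`. -/
def MaximizingSeq {E F : Type*} [NormedAddCommGroup E] [NormedSpace ℝ E]
    [NormedAddCommGroup F] [NormedSpace ℝ F] (T : E →L[ℝ] F) (x : ℕ → E) : Prop :=
  (∀ n, ‖x n‖ = 1) ∧ Tendsto (fun n => ‖T (x n)‖) atTop (𝓝 ‖T‖)

/-- `x` converges to `0` in the weak topology of `E`. -/
def WeaklyNull {E : Type*} [NormedAddCommGroup E] [NormedSpace ℝ E] (x : ℕ → E) : Prop :=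
  ∀ f : E →L[ℝ] ℝ, Tendsto (fun n => f (x n)) atTop (𝓝 0)

/-- `T` attains its norm. -/
def AttainsNorm {E F : Type*} [NormedAddCommGroup E] [NormedSpace ℝ E]
    [NormedAddCommGroup F] [NormedSpace ℝ F] (T : E →L[ℝ] F) : Prop :=
  ∃ x : E, ‖x‖ = 1 ∧ ‖T x‖ = ‖T‖

/-- The pair `(E, F)` has the weak maximizing property: every bounded linear operator
`T : E → F` admitting a maximizing sequence that does not converge weakly to `0`
attains its norm. -/
def WMP (E F : Type*) [NormedAddCommGroup E] [NormedSpace ℝ E]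
    [NormedAddCommGroup F] [NormedSpace ℝ F] : Prop :=
  ∀ T : E →L[ℝ] F, (∃ x : ℕ → E, MaximizingSeq T x ∧ ¬ WeaklyNull x) → AttainsNorm T

/-- The real Banach space `ℓ_r`. -/
noncomputable abbrev ellSeq (r : ℝ) : Type := lp (fun _ : ℕ => ℝ) (ENNReal.ofReal r)


/-! ### The two-dimensional `ℓ_r` norm -/

/-- The `ℓ_r` norm of the pair `(a, b)`; only used for `a, b ≥ 0`. -/
noncomputable def pairNorm (r a b : ℝ) : ℝ := (a ^ r + b ^ r) ^ (1 / r)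

lemma pairNorm_nonneg {r a b : ℝ} (ha : 0 ≤ a) (hb : 0 ≤ b) : 0 ≤ pairNorm r a b := by
  unfold pairNorm; positivity

lemma pairNorm_rpow {r a b : ℝ} (hr : 0 < r) (ha : 0 ≤ a) (hb : 0 ≤ b) :
    pairNorm r a b ^ r = a ^ r + b ^ r := by
  unfold pairNorm
  rw [← Real.rpow_mul (by positivity), one_div_mul_cancel hr.ne', Real.rpow_one]

lemma eq_pairNorm_of_rpow {r a b c : ℝ} (hr : 0 < r) (hc : 0 ≤ c)
    (h : c ^ r = a ^ r + b ^ r) : c = pairNorm r a b := by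
  unfold pairNorm
  rw [← h, ← Real.rpow_mul hc, mul_one_div_cancel hr.ne', Real.rpow_one]

lemma pairNorm_mono {r a b a' b' : ℝ} (hr : 0 < r) (ha : 0 ≤ a) (hb : 0 ≤ b)
    (haa : a ≤ a') (hbb : b ≤ b') : pairNorm r a b ≤ pairNorm r a' b' := by
  unfold pairNorm
  gcongr

lemma pairNorm_lt_right {r a b b' : ℝ} (hr : 0 < r) (ha : 0 ≤ a) (hb : 0 ≤ b)
    (hbb : b < b') : pairNorm r a b < pairNorm r a b' := by
  unfold pairNorm
  gcongr

lemma pairNorm_zero_right {r a : ℝ} (hr : 0 < r) (ha : 0 ≤ a) : pairNorm r a 0 = a := by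
  refine (eq_pairNorm_of_rpow hr ha ?_).symm
  rw [Real.zero_rpow hr.ne', add_zero]

lemma pairNorm_zero_left {r a : ℝ} (hr : 0 < r) (ha : 0 ≤ a) : pairNorm r 0 a = a := by
  refine (eq_pairNorm_of_rpow hr ha ?_).symm
  rw [Real.zero_rpow hr.ne', zero_add]

lemma pairNorm_comm (r a b : ℝ) : pairNorm r a b = pairNorm r b a := by
  unfold pairNorm; rw [add_comm]

lemma pairNorm_anti {r t a b : ℝ} (hr : 0 < r) (hrt : r ≤ t) (ha : 0 ≤ a) (hb : 0 ≤ b) :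
    pairNorm t a b ≤ pairNorm r a b := Real.rpow_add_rpow_le ha hb hr hrt

/-- Minkowski's inequality in dimension two. -/
lemma pairNorm_add_le {r a b c d : ℝ} (hr : 1 ≤ r) (ha : 0 ≤ a) (hb : 0 ≤ b) (hc : 0 ≤ c)
    (hd : 0 ≤ d) : pairNorm r (a + c) (b + d) ≤ pairNorm r a b + pairNorm r c d := by
  have := Real.Lp_add_le_of_nonneg (Finset.univ : Finset (Fin 2)) (f := ![a, b]) (g := ![c, d]) hr
    (by intro i _; fin_cases i <;> simpa) (by intro i _; fin_cases i <;> simpa)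
  simpa [pairNorm, Fin.sum_univ_two] using this

lemma pairNorm_le_add {r a b : ℝ} (hr : 1 ≤ r) (ha : 0 ≤ a) (hb : 0 ≤ b) :
    pairNorm r a b ≤ a + b := Real.rpow_add_rpow_le_add ha hb hr

/-- A crude Lipschitz estimate for `pairNorm`. -/
lemma pairNorm_le_of_le_add {r a b a' b' c d : ℝ} (hr : 1 ≤ r) (ha : 0 ≤ a) (hb : 0 ≤ b)
    (ha' : 0 ≤ a') (hb' : 0 ≤ b') (hc : 0 ≤ c) (hd : 0 ≤ d) (h1 : a ≤ a' + c) (h2 : b ≤ b' + d) :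
    pairNorm r a b ≤ pairNorm r a' b' + c + d := by
  have e1 := pairNorm_mono (r := r) (by linarith) ha hb h1 h2
  have e2 := pairNorm_add_le hr ha' hb' hc hd
  have e3 := pairNorm_le_add hr hc hd
  linarith

/-- The inclusion `ℓ_r(ℓ_t) ⊆ ℓ_t(ℓ_r)` for `r ≤ t`: Minkowski's inequality in the exponent
`t / r`, for `2 × 2` matrices. -/
lemma pairNorm_exchange {r t a b u v : ℝ} (hr : 0 < r) (hrt : r ≤ t) (ha : 0 ≤ a) (hb : 0 ≤ b)
    (hu : 0 ≤ u) (hv : 0 ≤ v) :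
    pairNorm t (pairNorm r a u) (pairNorm r b v) ≤
      pairNorm r (pairNorm t a b) (pairNorm t u v) := by
  have ht : 0 < t := hr.trans_le hrt
  have h1 : 1 ≤ t / r := (one_le_div hr).2 hrt
  have key := pairNorm_add_le (r := t / r) (a := a ^ r) (b := b ^ r) (c := u ^ r) (d := v ^ r) h1
    (by positivity) (by positivity) (by positivity) (by positivity)
  have e : ∀ x : ℝ, 0 ≤ x → (x ^ r) ^ (t / r) = x ^ t := fun x hx => by
    rw [← Real.rpow_mul hx, mul_div_cancel₀ _ hr.ne']
  have e2 : ∀ x y : ℝ, 0 ≤ x → 0 ≤ y → pairNorm (t / r) (x ^ r) (y ^ r) = pairNorm t x y ^ r :=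
    fun x y hx hy => by
      have : 0 ≤ x ^ t + y ^ t := by positivity
      unfold pairNorm
      rw [e x hx, e y hy, ← Real.rpow_mul this]
      congr 1; field_simp
  rw [← pairNorm_rpow hr ha hu, ← pairNorm_rpow hr hb hv,
    e2 _ _ (pairNorm_nonneg ha hu) (pairNorm_nonneg hb hv), e2 a b ha hb, e2 u v hu hv,
    ← pairNorm_rpow hr (pairNorm_nonneg ha hb) (pairNorm_nonneg hu hv)] at key
  exact (Real.rpow_le_rpow_iff
    (pairNorm_nonneg (pairNorm_nonneg ha hu) (pairNorm_nonneg hb hv))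
    (pairNorm_nonneg (pairNorm_nonneg ha hb) (pairNorm_nonneg hu hv)) hr).1 key

/-- The norm of the identity from `ℓ_t²` to `ℓ_r²` for `r ≤ t`, the constant being attained at
`(1, 1)`. -/
lemma pairNorm_le_const_mul {r t a b : ℝ} (hr : 0 < r) (hrt : r ≤ t) (ha : 0 ≤ a) (hb : 0 ≤ b) :
    pairNorm r a b ≤ 2 ^ (1 / r - 1 / t) * pairNorm t a b := by
  have ht : 0 < t := hr.trans_le hrt
  have h1 : 1 ≤ t / r := (one_le_div hr).2 hrt
  have key : (a ^ r + b ^ r) ^ (t / r) ≤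
      2 ^ (t / r - 1) * ((a ^ r) ^ (t / r) + (b ^ r) ^ (t / r)) := by
    exact_mod_cast NNReal.rpow_add_le_mul_rpow_add_rpow ⟨a ^ r, by positivity⟩
      ⟨b ^ r, by positivity⟩ h1
  have e : ∀ x : ℝ, 0 ≤ x → (x ^ r) ^ (t / r) = x ^ t := fun x hx => by
    rw [← Real.rpow_mul hx, mul_div_cancel₀ _ hr.ne']
  rw [e a ha, e b hb, ← pairNorm_rpow hr ha hb, e _ (pairNorm_nonneg ha hb),
    ← pairNorm_rpow ht ha hb] at key
  refine (Real.rpow_le_rpow_iff (pairNorm_nonneg ha hb)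
    (mul_nonneg (by positivity) (pairNorm_nonneg ha hb)) ht).1 ?_
  rw [Real.mul_rpow (by positivity) (pairNorm_nonneg ha hb), ← Real.rpow_mul (by norm_num)]
  convert key using 3
  field_simp

lemma pairNorm_self {r a : ℝ} (hr : 0 < r) (ha : 0 ≤ a) :
    pairNorm r a a = 2 ^ (1 / r) * a := by
  refine (eq_pairNorm_of_rpow hr (by positivity) ?_).symm
  rw [Real.mul_rpow (by positivity) ha, ← Real.rpow_mul (by norm_num), one_div_mul_cancel hr.ne',
    Real.rpow_one, two_mul]

/-! ### Diagonal operators and coordinate projections on `ℓ_r` -/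

lemma toReal_ofReal_of_one_lt {r : ℝ} (hr : 1 < r) : (ENNReal.ofReal r).toReal = r :=
  ENNReal.toReal_ofReal (by linarith)

lemma ellSeq_hasSum {r : ℝ} (hr : 1 < r) (a : ellSeq r) :
    HasSum (fun i => |a i| ^ r) (‖a‖ ^ r) := by
  have h := lp.hasSum_norm (p := ENNReal.ofReal r) (by rw [toReal_ofReal_of_one_lt hr]; linarith) a
  rw [toReal_ofReal_of_one_lt hr] at h
  exact h

section ellSeq

variable {r : ℝ} [Fact (1 ≤ ENNReal.ofReal r)]

lemma ellSeq_abs_apply_le (a : ellSeq r) (i : ℕ) : |a i| ≤ ‖a‖ :=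
  lp.norm_apply_le_norm (by have := (Fact.out : 1 ≤ ENNReal.ofReal r); positivity) a i

/-- Coordinatewise multiplication by a sequence `m` with `|m i| ≤ 1`. -/
noncomputable def diagOp (r : ℝ) [Fact (1 ≤ ENNReal.ofReal r)] (m : ℕ → ℝ)
    (hm : ∀ i, |m i| ≤ 1) : ellSeq r →L[ℝ] ellSeq r :=
  LinearMap.mkContinuous
    { toFun := fun a => ⟨fun i => m i * a i, (lp.memℓp a).mono' (fun i => by
        rw [norm_mul]; exact mul_le_of_le_one_left (norm_nonneg _) (hm i))⟩
      map_add' := fun a b => by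
        ext i; exact mul_add _ _ _
      map_smul' := fun c a => by
        ext i; exact mul_left_comm _ _ _ } 1
    (fun a => by
      rw [one_mul]
      refine lp.norm_mono (by have := (Fact.out : 1 ≤ ENNReal.ofReal r); positivity) (fun i => ?_)
      show ‖m i * a i‖ ≤ _
      rw [norm_mul]; exact mul_le_of_le_one_left (norm_nonneg _) (hm i))

@[simp] lemma diagOp_apply (m : ℕ → ℝ) (hm : ∀ i, |m i| ≤ 1) (a : ellSeq r) (i : ℕ) :
    diagOp r m hm a i = m i * a i := rfl

/-- The projection of `ℓ_r` onto the first `N` coordinates. -/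
noncomputable def cutOp (r : ℝ) [Fact (1 ≤ ENNReal.ofReal r)] (N : ℕ) :
    ellSeq r →L[ℝ] ellSeq r :=
  diagOp r (fun i => if i < N then 1 else 0) (fun i => by split_ifs <;> simp)

lemma cutOp_apply (N : ℕ) (a : ellSeq r) (i : ℕ) :
    cutOp r N a i = if i < N then a i else 0 := by
  simp [cutOp]

/-- Disjointly supported vectors of `ℓ_r` add up as in `ℓ_r`. -/
lemma ellSeq_norm_add_of_disjoint (hr : 1 < r) (a b : ellSeq r) (h : ∀ i, a i = 0 ∨ b i = 0) :
    ‖a + b‖ = pairNorm r ‖a‖ ‖b‖ := by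
  have hr0 : r ≠ 0 := by linarith
  refine eq_pairNorm_of_rpow (by linarith) (norm_nonneg _) ?_
  refine (ellSeq_hasSum hr (a + b)).unique ?_
  refine ((ellSeq_hasSum hr a).add (ellSeq_hasSum hr b)).congr_fun (fun i => ?_)
  rcases h i with h | h <;> simp [h, Real.zero_rpow hr0]

lemma cutOp_norm_add (hr : 1 < r) (N : ℕ) (a u : ellSeq r) :
    ‖cutOp r N a + (u - cutOp r N u)‖ = pairNorm r ‖cutOp r N a‖ ‖u - cutOp r N u‖ := by
  refine ellSeq_norm_add_of_disjoint hr _ _ (fun i => ?_)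
  by_cases hi : i < N <;> simp [cutOp_apply, hi]

lemma cutOp_eq_sum (N : ℕ) (a : ellSeq r) :
    cutOp r N a = ∑ i ∈ Finset.range N, lp.single (ENNReal.ofReal r) i (a i) := by
  ext j
  rw [cutOp_apply, lp.coeFn_sum, Finset.sum_apply]
  simp [lp.single_apply, Pi.single_apply]

lemma cutOp_tendsto (a : ellSeq r) : Tendsto (fun N => cutOp r N a) atTop (𝓝 a) := by
  simp_rw [cutOp_eq_sum]
  exact (lp.hasSum_single ENNReal.ofReal_ne_top a).tendsto_sum_nat

lemma cutOp_tendsto_zero (N : ℕ) {w : ℕ → ellSeq r}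
    (hw : ∀ i, Tendsto (fun n => w n i) atTop (𝓝 0)) :
    Tendsto (fun n => cutOp r N (w n)) atTop (𝓝 0) := by
  simp_rw [cutOp_eq_sum]
  rw [show (0 : ellSeq r) = ∑ i ∈ Finset.range N, (0 : ellSeq r) by simp]
  refine tendsto_finsetSum _ (fun i _ => ?_)
  have hc : Continuous (lp.single (E := fun _ : ℕ => ℝ) (ENNReal.ofReal r) i) :=
    (lp.isometry_single i).continuous
  have := (hc.tendsto 0).comp (hw i)
  rw [lp.single_zero] at this
  exact this

end ellSeq

/-! ### Asymptotic norm of `y + w n` for coordinatewise null sequences -/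

/-- If vectors split by the projections `P N` satisfy an upper `s`-estimate, then so do, up to
`o(1)`, a fixed vector and a sequence that is asymptotically invisible to every `P N`. -/
lemma asymp_upper {X : Type*} [NormedAddCommGroup X] {s : ℝ} (hs : 1 ≤ s) (P : ℕ → X → X)
    {y : X} {w : ℕ → X} (hy : Tendsto (fun N => P N y) atTop (𝓝 y))
    (hw : ∀ N, Tendsto (fun n => P N (w n)) atTop (𝓝 0))
    (hd : ∀ N y w, ‖P N y + (w - P N w)‖ ≤ pairNorm s ‖P N y‖ ‖w - P N w‖)
    {ε : ℝ} (hε : 0 < ε) : ∀ᶠ n in atTop, ‖y + w n‖ ≤ pairNorm s ‖y‖ ‖w n‖ + ε := by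
  obtain ⟨N, hN⟩ := (hy.eventually (Metric.ball_mem_nhds y (by positivity : 0 < ε / 4))).exists
  filter_upwards [(hw N).eventually (Metric.ball_mem_nhds 0 (by positivity : 0 < ε / 4))] with n hn
  rw [dist_eq_norm] at hN
  rw [dist_zero_right] at hn
  have e1 : ‖y + w n‖ ≤ ‖P N y + (w n - P N (w n))‖ + (‖P N y - y‖ + ‖P N (w n)‖) := by
    have e : y + w n = (P N y + (w n - P N (w n))) - ((P N y - y) - P N (w n)) := by abel
    rw [e]
    exact (norm_sub_le _ _).trans (add_le_add le_rfl (norm_sub_le _ _))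
  have e2 : ‖P N y‖ ≤ ‖y‖ + ‖P N y - y‖ := norm_le_norm_add_norm_sub' _ _
  have e3 := norm_sub_le (w n) (P N (w n))
  have e4 := pairNorm_le_of_le_add hs (norm_nonneg _) (norm_nonneg _) (norm_nonneg _)
    (norm_nonneg _) (norm_nonneg _) (norm_nonneg _) e2 e3
  linarith [hd N y (w n)]

/-- The lower counterpart of `asymp_upper`. -/
lemma asymp_lower {X : Type*} [NormedAddCommGroup X] {s : ℝ} (hs : 1 ≤ s) (P : ℕ → X → X)
    {y : X} {w : ℕ → X} (hy : Tendsto (fun N => P N y) atTop (𝓝 y))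
    (hw : ∀ N, Tendsto (fun n => P N (w n)) atTop (𝓝 0))
    (hd : ∀ N y w, pairNorm s ‖P N y‖ ‖w - P N w‖ ≤ ‖P N y + (w - P N w)‖)
    {ε : ℝ} (hε : 0 < ε) : ∀ᶠ n in atTop, pairNorm s ‖y‖ ‖w n‖ ≤ ‖y + w n‖ + ε := by
  obtain ⟨N, hN⟩ := (hy.eventually (Metric.ball_mem_nhds y (by positivity : 0 < ε / 4))).exists
  filter_upwards [(hw N).eventually (Metric.ball_mem_nhds 0 (by positivity : 0 < ε / 4))] with n hn
  rw [dist_eq_norm] at hN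
  rw [dist_zero_right] at hn
  have e1 : ‖P N y + (w n - P N (w n))‖ ≤ ‖y + w n‖ + (‖P N y - y‖ + ‖P N (w n)‖) := by
    have e : P N y + (w n - P N (w n)) = (y + w n) + ((P N y - y) - P N (w n)) := by abel
    rw [e]
    exact (norm_add_le _ _).trans (add_le_add le_rfl (norm_sub_le _ _))
  have e2 : ‖y‖ ≤ ‖P N y‖ + ‖P N y - y‖ := norm_le_norm_add_norm_sub _ _
  have e3 : ‖w n‖ ≤ ‖w n - P N (w n)‖ + ‖P N (w n)‖ := by
    simpa using norm_add_le (w n - P N (w n)) (P N (w n))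
  have e4 := pairNorm_le_of_le_add hs (norm_nonneg _) (norm_nonneg _) (norm_nonneg _)
    (norm_nonneg _) (norm_nonneg _) (norm_nonneg _) e2 e3
  linarith [hd N y (w n)]

/-! ### Bounded coordinatewise null sequences are weakly null -/

section WeakNull

variable {r : ℝ} [Fact (1 ≤ ENNReal.ofReal r)]

/-- One-sided form of `ellSeq_weaklyNull`. If `f` almost attains its norm at `y`, then
`f (y + t w n) ≤ ‖f‖ ‖y + t w n‖ ≲ ‖f‖ (1 + (t C) ^ r)`, which bounds `f (w n)` by
`O(t ^ (r - 1))`. -/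
lemma ellSeq_apply_lt (hr : 1 < r) (f : ellSeq r →L[ℝ] ℝ) {w : ℕ → ellSeq r} {C : ℝ}
    (hC : ∀ n, ‖w n‖ ≤ C) (hw : ∀ i, Tendsto (fun n => w n i) atTop (𝓝 0)) {δ : ℝ} (hδ : 0 < δ) :
    ∀ᶠ n in atTop, f (w n) < δ := by
  have hr0 : 0 < r := by linarith
  have hC0 : 0 ≤ C := (norm_nonneg _).trans (hC 0)
  obtain ⟨t, ht0, ht⟩ : ∃ t : ℝ, 0 < t ∧ ‖f‖ * C ^ r * t ^ (r - 1) < δ / 2 := by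
    have hcont : Tendsto (fun t : ℝ => ‖f‖ * C ^ r * t ^ (r - 1)) (𝓝[>] 0) (𝓝 0) := by
      have h0 : Tendsto (fun t : ℝ => t ^ (r - 1)) (𝓝 0) (𝓝 0) := by
        simpa [Real.zero_rpow (by linarith : r - 1 ≠ 0)] using
          (Real.continuousAt_rpow_const 0 (r - 1) (Or.inr (by linarith))).tendsto
      simpa using (h0.mono_left nhdsWithin_le_nhds).const_mul (‖f‖ * C ^ r)
    obtain ⟨t, h1, h2⟩ := ((hcont.eventually (gt_mem_nhds (by positivity : 0 < δ / 2))).and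
      self_mem_nhdsWithin).exists
    exact ⟨t, h2, h1⟩
  set ε := t * δ / (4 * (‖f‖ + 1)) with hε
  have hε0 : 0 < ε := by positivity
  have hfε : (‖f‖ + 1) * ε = t * δ / 4 := by rw [hε]; field_simp
  obtain ⟨y, hy1, hy⟩ : ∃ y : ellSeq r, ‖y‖ ≤ 1 ∧ ‖f‖ - ε < f y := by
    obtain ⟨y, hy1, hy⟩ := f.exists_lt_apply_of_lt_opNorm (r := ‖f‖ - ε) (by linarith)
    rcases abs_cases (f y) with ⟨h, _⟩ | ⟨h, _⟩
    · exact ⟨y, hy1.le, by rwa [Real.norm_eq_abs, h] at hy⟩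
    · exact ⟨-y, by rw [norm_neg]; exact hy1.le, by rwa [Real.norm_eq_abs, h, ← map_neg] at hy⟩
  have hasy := asymp_upper hr.le (fun N => cutOp r N) (y := y) (w := fun n => t • w n)
    (cutOp_tendsto y)
    (fun N => cutOp_tendsto_zero N (fun i => by simpa using (hw i).const_mul t))
    (fun N y w => (cutOp_norm_add hr N y w).le) hε0
  filter_upwards [hasy] with n hn
  have h1 : pairNorm r ‖y‖ ‖t • w n‖ ≤ 1 + (t * C) ^ r := by
    have hle : ‖t • w n‖ ≤ t * C := by
      rw [norm_smul, Real.norm_of_nonneg ht0.le]; gcongr; exact hC n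
    refine (pairNorm_mono hr0 (norm_nonneg _) (norm_nonneg _) hy1 hle).trans ?_
    unfold pairNorm
    rw [Real.one_rpow]
    have hb : 1 ≤ 1 + (t * C) ^ r := le_add_of_nonneg_right (by positivity)
    calc (1 + (t * C) ^ r) ^ (1 / r) ≤ (1 + (t * C) ^ r) ^ (1 : ℝ) :=
          Real.rpow_le_rpow_of_exponent_le hb (by rw [div_le_one hr0]; exact hr.le)
      _ = _ := Real.rpow_one _
  have h2 : f y + t * f (w n) ≤ ‖f‖ * (1 + (t * C) ^ r + ε) := by
    have : f (y + t • w n) = f y + t * f (w n) := by simp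
    rw [← this]
    calc f (y + t • w n) ≤ ‖f (y + t • w n)‖ := Real.le_norm_self _
      _ ≤ ‖f‖ * ‖y + t • w n‖ := f.le_opNorm _
      _ ≤ _ := by gcongr; linarith
  have h3 : (t * C) ^ r = t * (C ^ r * t ^ (r - 1)) := by
    rw [Real.mul_rpow ht0.le hC0, Real.rpow_sub_one ht0.ne']; field_simp
  rw [h3] at h2
  have h4 : t * (‖f‖ * C ^ r * t ^ (r - 1)) < t * (δ / 2) := by gcongr
  refine lt_of_mul_lt_mul_left ?_ ht0.le
  nlinarith

/-- This is where `1 < r` is needed: it fails in `ℓ_1`. -/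
lemma ellSeq_weaklyNull (hr : 1 < r) {w : ℕ → ellSeq r} {C : ℝ}
    (hC : ∀ n, ‖w n‖ ≤ C) (hw : ∀ i, Tendsto (fun n => w n i) atTop (𝓝 0)) : WeaklyNull w := by
  intro f
  rw [Metric.tendsto_nhds]
  intro δ hδ
  filter_upwards [ellSeq_apply_lt hr f hC hw hδ, ellSeq_apply_lt hr (-f) hC hw hδ] with n h1 h2
  rw [neg_apply] at h2
  rw [dist_zero_right, Real.norm_eq_abs, abs_lt]
  constructor <;> linarith

end WeakNull

/-! ### The spaces `ℓ_s ⊕_r ℓ_r` -/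

/-- The space `ℓ_s ⊕_r ℓ_r`. -/
abbrev SumSeq (s r : ℝ) : Type := WithLp (ENNReal.ofReal r) (ellSeq s × ellSeq r)

lemma sumSeq_norm {s r : ℝ} (hr : 1 < r) (x : SumSeq s r) :
    ‖x‖ = pairNorm r ‖x.fst‖ ‖x.snd‖ := by
  rw [WithLp.prod_norm_eq_add (by rw [toReal_ofReal_of_one_lt hr]; linarith),
    toReal_ofReal_of_one_lt hr]
  rfl

section SumSeq

variable {s r : ℝ} [Fact (1 ≤ ENNReal.ofReal s)] [Fact (1 ≤ ENNReal.ofReal r)]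

lemma sumSeq_norm_fst_le (hr : 1 < r) (x : SumSeq s r) : ‖x.fst‖ ≤ ‖x‖ := by
  have h := pairNorm_mono (r := r) (by linarith) (norm_nonneg x.fst) le_rfl le_rfl
    (norm_nonneg x.snd)
  rwa [pairNorm_zero_right (by linarith) (norm_nonneg _), ← sumSeq_norm hr] at h

lemma sumSeq_norm_snd_le (hr : 1 < r) (x : SumSeq s r) : ‖x.snd‖ ≤ ‖x‖ := by
  have h := pairNorm_mono (r := r) (by linarith) le_rfl (norm_nonneg x.snd)
    (norm_nonneg x.fst) le_rfl
  rwa [pairNorm_zero_left (by linarith) (norm_nonneg _), ← sumSeq_norm hr] at h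

/-- The projection of `ℓ_s ⊕_r ℓ_r` onto the first `N` coordinates of both summands. -/
noncomputable def cutSum (s r : ℝ) [Fact (1 ≤ ENNReal.ofReal s)] [Fact (1 ≤ ENNReal.ofReal r)]
    (N : ℕ) (x : SumSeq s r) : SumSeq s r :=
  WithLp.toLp _ (cutOp s N x.fst, cutOp r N x.snd)

/-- Each scalar coordinate of `w n`, in either summand, tends to `0` as `n → ∞`. -/
def CoordNull (w : ℕ → SumSeq s r) : Prop :=
  (∀ i, Tendsto (fun n => (w n).fst i) atTop (𝓝 0)) ∧
    ∀ i, Tendsto (fun n => (w n).snd i) atTop (𝓝 0)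

lemma tendsto_toLp {a : ℕ → ellSeq s} {b : ℕ → ellSeq r} {a₀ : ellSeq s} {b₀ : ellSeq r}
    (ha : Tendsto a atTop (𝓝 a₀)) (hb : Tendsto b atTop (𝓝 b₀)) :
    Tendsto (fun n => (WithLp.toLp _ (a n, b n) : SumSeq s r)) atTop
      (𝓝 (WithLp.toLp _ (a₀, b₀))) :=
  ((WithLp.prodContinuousLinearEquiv (ENNReal.ofReal r) ℝ (ellSeq s)
    (ellSeq r)).symm.continuous.tendsto (a₀, b₀)).comp (ha.prodMk_nhds hb)

lemma cutSum_tendsto (x : SumSeq s r) : Tendsto (fun N => cutSum s r N x) atTop (𝓝 x) :=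
  tendsto_toLp (cutOp_tendsto x.fst) (cutOp_tendsto x.snd)

lemma cutSum_tendsto_zero {w : ℕ → SumSeq s r} (hw : CoordNull w) (N : ℕ) :
    Tendsto (fun n => cutSum s r N (w n)) atTop (𝓝 0) :=
  tendsto_toLp (cutOp_tendsto_zero N hw.1) (cutOp_tendsto_zero N hw.2)

lemma cutSum_norm_add (hs : 1 < s) (hr : 1 < r) (N : ℕ) (y w : SumSeq s r) :
    ‖cutSum s r N y + (w - cutSum s r N w)‖ =
      pairNorm r (pairNorm s ‖cutOp s N y.fst‖ ‖w.fst - cutOp s N w.fst‖)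
        (pairNorm r ‖cutOp r N y.snd‖ ‖w.snd - cutOp r N w.snd‖) := by
  rw [sumSeq_norm hr, ← cutOp_norm_add hs, ← cutOp_norm_add hr]
  rfl

/-- `ℓ_s ⊕_r ℓ_r` has an upper `s`-estimate for vectors split by `cutSum` if `s ≤ r`. -/
lemma cutSum_upper (hs : 1 < s) (hr : 1 < r) (hsr : s ≤ r) (N : ℕ) (y w : SumSeq s r) :
    ‖cutSum s r N y + (w - cutSum s r N w)‖ ≤
      pairNorm s ‖cutSum s r N y‖ ‖w - cutSum s r N w‖ := by
  rw [cutSum_norm_add hs hr, sumSeq_norm hr (cutSum s r N y), sumSeq_norm hr (w - cutSum s r N w)]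
  have h0 : 0 < s := by linarith
  refine le_trans ?_ (pairNorm_exchange h0 hsr (norm_nonneg _) (norm_nonneg _) (norm_nonneg _)
    (norm_nonneg _))
  exact pairNorm_mono (by linarith) (pairNorm_nonneg (norm_nonneg _) (norm_nonneg _))
    (pairNorm_nonneg (norm_nonneg _) (norm_nonneg _)) le_rfl
    (pairNorm_anti h0 hsr (norm_nonneg _) (norm_nonneg _))

/-- `ℓ_s ⊕_r ℓ_r` has a lower `s`-estimate for vectors split by `cutSum` if `r ≤ s`. -/
lemma cutSum_lower (hs : 1 < s) (hr : 1 < r) (hrs : r ≤ s) (N : ℕ) (y w : SumSeq s r) :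
    pairNorm s ‖cutSum s r N y‖ ‖w - cutSum s r N w‖ ≤
      ‖cutSum s r N y + (w - cutSum s r N w)‖ := by
  rw [cutSum_norm_add hs hr, sumSeq_norm hr (cutSum s r N y), sumSeq_norm hr (w - cutSum s r N w)]
  have h0 : 0 < r := by linarith
  refine (pairNorm_exchange h0 hrs (norm_nonneg _) (norm_nonneg _) (norm_nonneg _)
    (norm_nonneg _)).trans ?_
  exact pairNorm_mono (by linarith) (pairNorm_nonneg (norm_nonneg _) (norm_nonneg _))
    (pairNorm_nonneg (norm_nonneg _) (norm_nonneg _)) le_rfl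
    (pairNorm_anti h0 hrs (norm_nonneg _) (norm_nonneg _))

lemma CoordNull.weaklyNull (hs : 1 < s) (hr : 1 < r) {w : ℕ → SumSeq s r} (hw : CoordNull w)
    {C : ℝ} (hC : ∀ n, ‖w n‖ ≤ C) : WeaklyNull w := by
  intro f
  have h1 := ellSeq_weaklyNull hs (fun n => (sumSeq_norm_fst_le hr (w n)).trans (hC n)) hw.1
  have h2 := ellSeq_weaklyNull hr (fun n => (sumSeq_norm_snd_le hr (w n)).trans (hC n)) hw.2
  let g := f.comp ((WithLp.prodContinuousLinearEquiv (ENNReal.ofReal r) ℝ (ellSeq s)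
    (ellSeq r)).symm : (ellSeq s × ellSeq r) →L[ℝ] SumSeq s r)
  have h3 := (h1 (g.comp (ContinuousLinearMap.inl ℝ _ _))).add
    (h2 (g.comp (ContinuousLinearMap.inr ℝ _ _)))
  rw [add_zero] at h3
  refine h3.congr (fun n => ?_)
  change g ((w n).fst, 0) + g (0, (w n).snd) = g ((w n).fst, (w n).snd)
  rw [← map_add, Prod.mk_add_mk, add_zero, zero_add]

lemma WeaklyNull.coordNull {w : ℕ → SumSeq s r} (hw : WeaklyNull w) : CoordNull w :=
  ⟨fun i => hw ((lp.evalCLM ℝ (fun _ : ℕ => ℝ) (ENNReal.ofReal s) i).comp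
      (WithLp.fstL (ENNReal.ofReal r) ℝ (ellSeq s) (ellSeq r))),
    fun i => hw ((lp.evalCLM ℝ (fun _ : ℕ => ℝ) (ENNReal.ofReal r) i).comp
      (WithLp.sndL (ENNReal.ofReal r) ℝ (ellSeq s) (ellSeq r)))⟩

/-- Weak sequential compactness of the unit ball, in coordinates. -/
lemma exists_subseq_coordNull (hr : 1 < r) {x : ℕ → SumSeq s r} (hx : ∀ n, ‖x n‖ ≤ 1) :
    ∃ (x₀ : SumSeq s r) (φ : ℕ → ℕ), StrictMono φ ∧ CoordNull (fun n => x (φ n) - x₀) := by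
  have hfst : ∀ n, ‖(x n).fst‖ ≤ 1 := fun n => (sumSeq_norm_fst_le hr (x n)).trans (hx n)
  have hsnd : ∀ n, ‖(x n).snd‖ ≤ 1 := fun n => (sumSeq_norm_snd_le hr (x n)).trans (hx n)
  have hK : IsCompact (Set.pi Set.univ (fun _ : ℕ => Metric.closedBall (0 : ℝ × ℝ) 1)) :=
    isCompact_univ_pi (fun _ => isCompact_closedBall _ _)
  obtain ⟨c, -, φ, hφ, hc⟩ := hK.tendsto_subseq
    (x := fun n i => ((x n).fst i, (x n).snd i)) (fun n i _ => by
      rw [mem_closedBall_zero_iff, Prod.norm_def]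
      exact max_le ((ellSeq_abs_apply_le _ i).trans (hfst n))
        ((ellSeq_abs_apply_le _ i).trans (hsnd n)))
  rw [tendsto_pi_nhds] at hc
  have hc1 : ∀ i, Tendsto (fun n => (x (φ n)).fst i) atTop (𝓝 (c i).1) :=
    fun i => (continuous_fst.tendsto _).comp (hc i)
  have hc2 : ∀ i, Tendsto (fun n => (x (φ n)).snd i) atTop (𝓝 (c i).2) :=
    fun i => (continuous_snd.tendsto _).comp (hc i)
  have m1 : Memℓp (fun i => (c i).1) (ENNReal.ofReal s) :=
    lp.memℓp_of_tendsto (F := fun n => (x (φ n)).fst) (l := atTop)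
      (isBounded_iff_forall_norm_le.2 ⟨1, by rintro _ ⟨n, rfl⟩; exact hfst _⟩)
      (tendsto_pi_nhds.2 hc1)
  have m2 : Memℓp (fun i => (c i).2) (ENNReal.ofReal r) :=
    lp.memℓp_of_tendsto (F := fun n => (x (φ n)).snd) (l := atTop)
      (isBounded_iff_forall_norm_le.2 ⟨1, by rintro _ ⟨n, rfl⟩; exact hsnd _⟩)
      (tendsto_pi_nhds.2 hc2)
  refine ⟨WithLp.toLp _ (⟨_, m1⟩, ⟨_, m2⟩), φ, hφ, fun i => ?_, fun i => ?_⟩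
  · have h := (hc1 i).sub_const (c i).1
    rw [sub_self] at h
    exact h
  · have h := (hc2 i).sub_const (c i).2
    rw [sub_self] at h
    exact h

end SumSeq

lemma tendsto_pairNorm {s : ℝ} (hs : 0 < s) {a b : ℕ → ℝ} {a₀ b₀ : ℝ}
    (ha : Tendsto a atTop (𝓝 a₀)) (hb : Tendsto b atTop (𝓝 b₀)) :
    Tendsto (fun n => pairNorm s (a n) (b n)) atTop (𝓝 (pairNorm s a₀ b₀)) :=
  ((ha.rpow_const (Or.inr hs.le)).add (hb.rpow_const (Or.inr hs.le))).rpow_const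
    (Or.inr (by positivity))

/-- The positive half: domain and codomain have matching lower and upper asymptotic
`s`-estimates, so `T` attains its norm in the direction of any nonzero weak cluster point of a
maximizing sequence. -/
lemma wmp_of_le {p q s : ℝ} (hp : 1 < p) (hq : 1 < q) (hs : 1 < s)
    [Fact (1 ≤ ENNReal.ofReal p)] [Fact (1 ≤ ENNReal.ofReal q)]
    [Fact (1 ≤ ENNReal.ofReal s)] (hps : p ≤ s) (hsq : s ≤ q) :
    WMP (SumSeq s p) (SumSeq s q) := by
  rintro T ⟨x, ⟨hx1, hxT⟩, hxw⟩
  have hs0 : 0 < s := by linarith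
  -- a functional witnessing that `x` is not weakly null, bounded below along a subsequence
  obtain ⟨f, hf⟩ : ∃ f : SumSeq s p →L[ℝ] ℝ, ¬ Tendsto (fun n => f (x n)) atTop (𝓝 0) := by
    simpa [WeaklyNull] using hxw
  obtain ⟨δ, hδ, hfreq⟩ : ∃ δ > 0, ∃ᶠ n in atTop, δ ≤ |f (x n)| := by
    rw [Metric.tendsto_nhds] at hf
    push Not at hf
    simpa [dist_zero_right] using hf
  obtain ⟨ψ, hψ, hψf⟩ := extraction_of_frequently_atTop hfreq
  obtain ⟨x₀, φ, hφ, hnull⟩ := exists_subseq_coordNull (x := x ∘ ψ) hp (fun n => (hx1 _).le)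
  have hbd : ∀ n, ‖(x ∘ ψ) (φ n) - x₀‖ ≤ 1 + ‖x₀‖ := fun n => by
    simpa [hx1] using norm_sub_le ((x ∘ ψ) (φ n)) x₀
  -- a further subsequence along which the norms of the differences converge
  obtain ⟨M, -, θ, hθ, hM⟩ := (isCompact_Icc (a := (0 : ℝ)) (b := 1 + ‖x₀‖)).tendsto_subseq
    (x := fun n => ‖(x ∘ ψ) (φ n) - x₀‖) (fun n => ⟨norm_nonneg _, hbd n⟩)
  set z : ℕ → SumSeq s p := fun n => x (ψ (φ (θ n))) with hz
  set w : ℕ → SumSeq s p := fun n => z n - x₀ with hwdef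
  have hzT : Tendsto (fun n => ‖T (z n)‖) atTop (𝓝 ‖T‖) :=
    hxT.comp ((hψ.comp (hφ.comp hθ)).tendsto_atTop)
  have hwnull : CoordNull w :=
    ⟨fun i => (hnull.1 i).comp hθ.tendsto_atTop, fun i => (hnull.2 i).comp hθ.tendsto_atTop⟩
  have hwweak : WeaklyNull w := hwnull.weaklyNull hs hp (fun n => hbd (θ n))
  have hwM : Tendsto (fun n => ‖w n‖) atTop (𝓝 M) := hM
  have hM0 : 0 ≤ M := ge_of_tendsto' hwM (fun n => norm_nonneg _)
  have hTnull : CoordNull (fun n => T (w n)) :=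
    WeaklyNull.coordNull (fun g => hwweak (g.comp T))
  have hzw : ∀ n, z n = x₀ + w n := fun n => by simp [hwdef]
  have hx0 : 0 < ‖x₀‖ := by
    rw [norm_pos_iff]
    rintro rfl
    have h1 : Tendsto (fun n => |f (w n)|) atTop (𝓝 0) := by simpa using (hwweak f).abs
    have h2 : δ ≤ 0 := ge_of_tendsto' h1 (fun n => by
      have := hψf (φ (θ n)); simpa [hwdef, hz] using this)
    linarith
  have low : pairNorm s ‖x₀‖ M ≤ 1 := by
    refine le_of_forall_pos_le_add (fun ε hε => ?_)
    have h := asymp_lower hs.le (fun N => cutSum s p N) (cutSum_tendsto x₀)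
      (cutSum_tendsto_zero hwnull) (cutSum_lower hs hp hps) hε
    refine le_of_tendsto (tendsto_pairNorm hs0 tendsto_const_nhds hwM) ?_
    filter_upwards [h] with n hn
    rwa [← hzw, hx1] at hn
  have upp : ‖T‖ ≤ pairNorm s ‖T x₀‖ (‖T‖ * M) := by
    refine le_of_forall_pos_le_add (fun ε hε => ?_)
    have h := asymp_upper hs.le (fun N => cutSum s q N) (cutSum_tendsto (T x₀))
      (cutSum_tendsto_zero hTnull) (cutSum_upper hs hq hsq) hε
    refine le_of_tendsto_of_tendsto hzT
      ((tendsto_pairNorm hs0 tendsto_const_nhds (hwM.const_mul ‖T‖)).add_const ε) ?_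
    filter_upwards [h] with n hn
    rw [← map_add, ← hzw] at hn
    refine hn.trans ?_
    gcongr
    exact pairNorm_mono hs0 (norm_nonneg _) (norm_nonneg _) le_rfl (T.le_opNorm _)
  have key : ‖T‖ * ‖x₀‖ ≤ ‖T x₀‖ := by
    have e1 := Real.rpow_le_rpow (pairNorm_nonneg (norm_nonneg _) hM0) low hs0.le
    have e2 := Real.rpow_le_rpow (norm_nonneg _) upp hs0.le
    rw [pairNorm_rpow hs0 (norm_nonneg _) hM0, Real.one_rpow] at e1
    rw [pairNorm_rpow hs0 (norm_nonneg _) (by positivity),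
      Real.mul_rpow (norm_nonneg _) hM0] at e2
    refine (Real.rpow_le_rpow_iff (by positivity) (norm_nonneg _) hs0).1 ?_
    rw [Real.mul_rpow (norm_nonneg _) (norm_nonneg _)]
    nlinarith [Real.rpow_nonneg (norm_nonneg T) s]
  refine ⟨‖x₀‖⁻¹ • x₀, ?_, ?_⟩
  · rw [norm_smul, norm_inv, norm_norm, inv_mul_cancel₀ hx0.ne']
  · rw [map_smul, norm_smul, norm_inv, norm_norm, le_antisymm (T.le_opNorm x₀) key]
    field_simp

/-! ### Operators without norming vectors -/

/-- If `x ↦ (α x, β x)` is contractive into `ℓ_t²` while `T` has the size of `(α x, β' x)` in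
`ℓ_r²` with `r < t` and `β' < β` off the zeros of `β`, then `T` does not attain its norm
`2 ^ (1 / r - 1 / t)`: where `β` vanishes `T` is contractive, and elsewhere replacing `β'` by `β`
strictly increases the size while keeping it within the same bound. The `z n` are, up to scaling,
a maximizing sequence, on which the functional `f` is constant. -/
lemma not_wmp_of_pairNorm {E F : Type*} [NormedAddCommGroup E] [NormedSpace ℝ E]
    [NormedAddCommGroup F] [NormedSpace ℝ F] {r t : ℝ} (hr : 1 < r) (hrt : r < t)
    (T : E →L[ℝ] F) (α β β' : E → ℝ) (hα : ∀ x, 0 ≤ α x) (hβ' : ∀ x, 0 ≤ β' x)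
    (hT : ∀ x, ‖T x‖ = pairNorm r (α x) (β' x)) (hx : ∀ x, pairNorm t (α x) (β x) ≤ ‖x‖)
    (hββ : ∀ x, β' x ≤ β x) (hlt : ∀ x, β x ≠ 0 → β' x < β x)
    (z : ℕ → E) (hz : ∀ n, ‖z n‖ = 2 ^ (1 / t)) (hzα : ∀ n, α (z n) = 1)
    (hzβ : Tendsto (fun n => β' (z n)) atTop (𝓝 1)) (f : E →L[ℝ] ℝ) (hf : ∀ n, f (z n) = 1) :
    ¬ WMP E F := by
  intro hW
  have hr0 : 0 < r := by linarith
  have ht0 : 0 < t := by linarith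
  have hβ : ∀ x, 0 ≤ β x := fun x => (hβ' x).trans (hββ x)
  have hk : (0 : ℝ) < 2 ^ (1 / t) := by positivity
  have hc0 : (0 : ℝ) < 2 ^ (1 / r - 1 / t) := by positivity
  have hc1 : (1 : ℝ) < 2 ^ (1 / r - 1 / t) := by
    refine Real.one_lt_rpow (by norm_num) ?_
    have := one_div_lt_one_div_of_lt hr0 hrt
    linarith
  have hβbound : ∀ x, pairNorm r (α x) (β x) ≤ 2 ^ (1 / r - 1 / t) * ‖x‖ := fun x =>
    (pairNorm_le_const_mul hr0 hrt.le (hα x) (hβ x)).trans (by gcongr; exact hx x)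
  have hle : ‖T‖ ≤ 2 ^ (1 / r - 1 / t) := T.opNorm_le_bound hc0.le (fun x => by
    rw [hT]
    exact (pairNorm_mono hr0 (hα x) (hβ' x) le_rfl (hββ x)).trans (hβbound x))
  set x : ℕ → E := fun n => ((2 : ℝ) ^ (1 / t))⁻¹ • z n with hxdef
  have hx1 : ∀ n, ‖x n‖ = 1 := fun n => by
    rw [hxdef, norm_smul, hz, norm_inv, Real.norm_of_nonneg hk.le, inv_mul_cancel₀ hk.ne']
  have hlim : Tendsto (fun n => ‖T (x n)‖) atTop (𝓝 (2 ^ (1 / r - 1 / t))) := by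
    have h := (tendsto_pairNorm hr0 (tendsto_const_nhds (x := (1 : ℝ))) hzβ).const_mul
      ((2 : ℝ) ^ (1 / t))⁻¹
    have e : ((2 : ℝ) ^ (1 / t))⁻¹ * pairNorm r 1 1 = 2 ^ (1 / r - 1 / t) := by
      rw [pairNorm_self hr0 zero_le_one, Real.rpow_sub (by norm_num)]; field_simp
    rw [e] at h
    refine h.congr (fun n => ?_)
    rw [hxdef, map_smul, norm_smul, hT, hzα, norm_inv, Real.norm_of_nonneg hk.le]
  have hnorm : ‖T‖ = 2 ^ (1 / r - 1 / t) :=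
    le_antisymm hle (le_of_tendsto' hlim (fun n => by simpa [hx1] using T.le_opNorm (x n)))
  obtain ⟨v, hv1, hv⟩ := hW T ⟨x, ⟨hx1, by rwa [hnorm]⟩, fun hw => by
    have h := hw f
    have e : (fun n => f (x n)) = fun _ => ((2 : ℝ) ^ (1 / t))⁻¹ := by
      funext n; rw [hxdef, map_smul, hf, smul_eq_mul, mul_one]
    rw [e, tendsto_const_nhds_iff] at h
    exact (inv_pos.2 hk).ne' h⟩
  rw [hnorm, hT] at hv
  have hb := hβbound v
  rw [hv1, mul_one] at hb
  by_cases h0 : β v = 0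
  · have h1 : β' v = 0 := le_antisymm (h0 ▸ hββ v) (hβ' v)
    have h2 := hx v
    rw [h0, pairNorm_zero_right ht0 (hα v), hv1] at h2
    rw [h1, pairNorm_zero_right hr0 (hα v)] at hv
    linarith
  · have := pairNorm_lt_right hr0 (hα v) (hβ' v) (hlt v h0)
    linarith

/-- The unit vectors of `ℓ_r`. -/
noncomputable def unitVec (r : ℝ) (i : ℕ) : ellSeq r := lp.single (ENNReal.ofReal r) i 1

lemma unitVec_apply {r : ℝ} (i j : ℕ) : unitVec r i j = if j = i then 1 else 0 := by
  simp [unitVec, Pi.single_apply]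

section Damp

variable {r : ℝ} [Fact (1 ≤ ENNReal.ofReal r)]

/-- The diagonal operator on `ℓ_r` with weights `i / (i + 1)`: it kills the coordinate `0`, has
norm `1`, and strictly decreases the norm of nonzero vectors. -/
noncomputable def dampOp (r : ℝ) [Fact (1 ≤ ENNReal.ofReal r)] : ellSeq r →L[ℝ] ellSeq r :=
  diagOp r (fun i => (i : ℝ) / (i + 1)) (fun i => by
    rw [abs_of_nonneg (by positivity), div_le_one (by positivity)]; linarith)

lemma dampOp_apply (a : ellSeq r) (i : ℕ) : dampOp r a i = (i : ℝ) / (i + 1) * a i := rfl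

lemma dampOp_norm_lt (hr : 1 < r) {a : ellSeq r} (ha : a ≠ 0) : ‖dampOp r a‖ < ‖a‖ := by
  have hr0 : 0 < r := by linarith
  have hw : ∀ i : ℕ, (i : ℝ) / (i + 1) < 1 := fun i => by
    rw [div_lt_one (by positivity)]; linarith
  obtain ⟨i, hi⟩ : ∃ i, a i ≠ 0 := by
    by_contra! h
    exact ha (lp.ext (funext h))
  have habs : ∀ j, |dampOp r a j| = (j : ℝ) / (j + 1) * |a j| := fun j => by
    rw [dampOp_apply, abs_mul, abs_of_nonneg (by positivity)]
  refine (Real.rpow_lt_rpow_iff (norm_nonneg _) (norm_nonneg _) hr0).1 ?_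
  refine hasSum_lt (i := i) (fun j => ?_) ?_ (ellSeq_hasSum hr (dampOp r a)) (ellSeq_hasSum hr a)
  · refine Real.rpow_le_rpow (abs_nonneg _) ?_ hr0.le
    rw [habs]
    exact mul_le_of_le_one_left (abs_nonneg _) (hw j).le
  · refine Real.rpow_lt_rpow (abs_nonneg _) ?_ hr0
    rw [habs]
    exact mul_lt_of_lt_one_left (abs_pos.2 hi) (hw i)

lemma dampOp_norm_le (hr : 1 < r) (a : ellSeq r) : ‖dampOp r a‖ ≤ ‖a‖ := by
  rcases eq_or_ne a 0 with rfl | h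
  · simp
  · exact (dampOp_norm_lt hr h).le

lemma norm_unitVec (i : ℕ) : ‖unitVec r i‖ = 1 := by
  rw [unitVec, lp.norm_single (zero_lt_one.trans_le Fact.out), norm_one]

lemma dampOp_unitVec (i : ℕ) : dampOp r (unitVec r i) = ((i : ℝ) / (i + 1)) • unitVec r i := by
  ext j
  rw [dampOp_apply, lp.coeFn_smul, Pi.smul_apply, unitVec_apply, smul_eq_mul]
  split_ifs with h
  · rw [h]
  · simp

lemma tendsto_norm_dampOp_unitVec :
    Tendsto (fun n => ‖dampOp r (unitVec r (n + 1))‖) atTop (𝓝 1) := by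
  have h := (tendsto_add_atTop_iff_nat 1).2 (tendsto_natCast_div_add_atTop (1 : ℝ))
  refine h.congr (fun n => ?_)
  rw [dampOp_unitVec, norm_smul, norm_unitVec, mul_one, Real.norm_of_nonneg (by positivity)]

/-- Splitting off the coordinate `0`. -/
lemma ellSeq_norm_smul_unitVec_add (hr : 1 < r) (c : ℝ) {b : ellSeq r} (hb : b 0 = 0) :
    ‖c • unitVec r 0 + b‖ = pairNorm r |c| ‖b‖ := by
  rw [ellSeq_norm_add_of_disjoint hr, norm_smul, norm_unitVec, mul_one, Real.norm_eq_abs]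
  intro i
  by_cases hi : i = 0
  · right; rw [hi, hb]
  · left
    rw [lp.coeFn_smul, Pi.smul_apply, unitVec_apply, if_neg hi, smul_zero]

/-- The coordinate `0` as a functional on `ℓ_r`. -/
noncomputable def evalZero (r : ℝ) [Fact (1 ≤ ENNReal.ofReal r)] : ellSeq r →L[ℝ] ℝ :=
  lp.evalCLM ℝ (fun _ : ℕ => ℝ) (ENNReal.ofReal r) 0

lemma evalZero_apply (a : ellSeq r) : evalZero r a = a 0 := rfl

lemma dampOp_apply_zero (a : ellSeq r) : dampOp r a 0 = 0 := by simp [dampOp_apply]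

end Damp

section Counterexamples

variable {p q s : ℝ} [Fact (1 ≤ ENNReal.ofReal p)] [Fact (1 ≤ ENNReal.ofReal q)]
    [Fact (1 ≤ ENNReal.ofReal s)]

/-- The counterexample is `T (u, b) = (b₀ e₀ + D u, 0)`, with `D` the operator `dampOp`: it maps
`ℝ ⊕_p ℓ_s` into `ℝ ⊕_s ℓ_s`. -/
lemma not_wmp_of_lt_left (hp : 1 < p) (hq : 1 < q) (hs : 1 < s) (h : s < p) :
    ¬ WMP (SumSeq s p) (SumSeq s q) := by
  let A : SumSeq s p →L[ℝ] ellSeq s :=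
    ((evalZero p).comp (WithLp.sndL (ENNReal.ofReal p) ℝ (ellSeq s) (ellSeq p))).smulRight
      (unitVec s 0) +
    (dampOp s).comp (WithLp.fstL (ENNReal.ofReal p) ℝ (ellSeq s) (ellSeq p))
  let T : SumSeq s p →L[ℝ] SumSeq s q :=
    ((WithLp.prodContinuousLinearEquiv (ENNReal.ofReal q) ℝ (ellSeq s) (ellSeq q)).symm :
      (ellSeq s × ellSeq q) →L[ℝ] SumSeq s q).comp (A.prod 0)
  have hA : ∀ x, A x = x.snd 0 • unitVec s 0 + dampOp s x.fst := fun x => rfl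
  have hTx : ∀ x, ‖T x‖ = ‖A x‖ := fun x => by
    rw [sumSeq_norm hq]
    change pairNorm q ‖A x‖ ‖(0 : ellSeq q)‖ = _
    rw [norm_zero, pairNorm_zero_right (by linarith) (norm_nonneg _)]
  refine not_wmp_of_pairNorm hs h T (fun x => |x.snd 0|) (fun x => ‖x.fst‖)
    (fun x => ‖dampOp s x.fst‖) (fun x => abs_nonneg _) (fun x => norm_nonneg _) (fun x => ?_)
    (fun x => ?_) (fun x => dampOp_norm_le hs _)
    (fun x hx => dampOp_norm_lt hs (norm_ne_zero_iff.1 hx))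
    (fun n => WithLp.toLp _ (unitVec s (n + 1), unitVec p 0)) (fun n => ?_) (fun n => ?_)
    tendsto_norm_dampOp_unitVec
    ((evalZero p).comp (WithLp.sndL (ENNReal.ofReal p) ℝ (ellSeq s) (ellSeq p))) (fun n => ?_)
  · rw [hTx, hA, ellSeq_norm_smul_unitVec_add hs _ (dampOp_apply_zero _)]
  · rw [sumSeq_norm hp x, pairNorm_comm]
    exact pairNorm_mono (by linarith) (norm_nonneg _) (abs_nonneg _) le_rfl
      (ellSeq_abs_apply_le _ _)
  · rw [sumSeq_norm hp]
    change pairNorm p ‖unitVec s (n + 1)‖ ‖unitVec p 0‖ = _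
    rw [norm_unitVec, norm_unitVec, pairNorm_self (by linarith) zero_le_one, mul_one]
  · change |unitVec p 0 0| = 1
    simp [unitVec_apply]
  · change unitVec p 0 0 = 1
    simp [unitVec_apply]

/-- The counterexample is `T (u, b) = (D u, u₀ e₀)`, with `D` the operator `dampOp`: it maps
`ℓ_s = ℝ ⊕_s ℓ_s` into `ℓ_s ⊕_q ℝ`. -/
lemma not_wmp_of_lt_right (hp : 1 < p) (hq : 1 < q) (hs : 1 < s) (h : q < s) :
    ¬ WMP (SumSeq s p) (SumSeq s q) := by
  let A : ellSeq s →L[ℝ] ellSeq s × ellSeq q :=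
    (dampOp s).prod ((evalZero s).smulRight (unitVec q 0))
  let T : SumSeq s p →L[ℝ] SumSeq s q :=
    ((WithLp.prodContinuousLinearEquiv (ENNReal.ofReal q) ℝ (ellSeq s) (ellSeq q)).symm :
      (ellSeq s × ellSeq q) →L[ℝ] SumSeq s q).comp
      (A.comp (WithLp.fstL (ENNReal.ofReal p) ℝ (ellSeq s) (ellSeq p)))
  let tail : ellSeq s → ellSeq s := fun a => a - a 0 • unitVec s 0
  have htail0 : ∀ a, tail a 0 = 0 := fun a => by
    change a 0 - a 0 * unitVec s 0 0 = 0
    simp [unitVec_apply]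
  have hDtail : ∀ a, dampOp s (tail a) = dampOp s a := fun a => by
    simp [tail, dampOp_unitVec]
  have hnorm : ∀ a : ellSeq s, ‖a‖ = pairNorm s |a 0| ‖tail a‖ := fun a => by
    rw [← ellSeq_norm_smul_unitVec_add hs _ (htail0 a)]
    simp [tail]
  refine not_wmp_of_pairNorm hq h T (fun x => |x.fst 0|) (fun x => ‖tail x.fst‖)
    (fun x => ‖dampOp s (tail x.fst)‖) (fun x => abs_nonneg _) (fun x => norm_nonneg _)
    (fun x => ?_) (fun x => ?_) (fun x => dampOp_norm_le hs _)
    (fun x hx => dampOp_norm_lt hs (norm_ne_zero_iff.1 hx))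
    (fun n => WithLp.toLp _ (unitVec s 0 + unitVec s (n + 1), 0)) (fun n => ?_) (fun n => ?_) ?_
    ((evalZero s).comp (WithLp.fstL (ENNReal.ofReal p) ℝ (ellSeq s) (ellSeq p))) (fun n => ?_)
  · rw [sumSeq_norm hq]
    change pairNorm q ‖dampOp s x.fst‖ ‖x.fst 0 • unitVec q 0‖ = _
    rw [norm_smul, norm_unitVec, mul_one, Real.norm_eq_abs, pairNorm_comm, hDtail]
  · rw [← hnorm]
    exact sumSeq_norm_fst_le hp x
  · rw [sumSeq_norm hp]
    change pairNorm p ‖unitVec s 0 + unitVec s (n + 1)‖ ‖(0 : ellSeq p)‖ = _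
    rw [norm_zero, pairNorm_zero_right (by linarith) (norm_nonneg _),
      ellSeq_norm_add_of_disjoint hs, norm_unitVec, norm_unitVec,
      pairNorm_self (by linarith) zero_le_one, mul_one]
    intro i
    by_cases hi : i = 0
    · right; simp [unitVec_apply, hi]
    · left; simp [unitVec_apply, hi]
  · change |unitVec s 0 0 + unitVec s (n + 1) 0| = 1
    simp [unitVec_apply]
  · refine (tendsto_norm_dampOp_unitVec (r := s)).congr (fun n => ?_)
    rw [hDtail]
    change _ = ‖dampOp s (unitVec s 0 + unitVec s (n + 1))‖
    rw [map_add, dampOp_unitVec 0]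
    simp
  · change unitVec s 0 0 + unitVec s (n + 1) 0 = 1
    simp [unitVec_apply]

end Counterexamples

theorem statement16 (p q s : ℝ) (hp : 1 < p) (hq : 1 < q) (hs : 1 < s)
    [Fact (1 ≤ ENNReal.ofReal p)] [Fact (1 ≤ ENNReal.ofReal q)]
    [Fact (1 ≤ ENNReal.ofReal s)] :
    WMP (WithLp (ENNReal.ofReal p) (ellSeq s × ellSeq p))
        (WithLp (ENNReal.ofReal q) (ellSeq s × ellSeq q)) ↔ (p ≤ s ∧ s ≤ q) := by
  refine ⟨fun h => ⟨?_, ?_⟩, fun h => wmp_of_le hp hq hs h.1 h.2⟩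
  · by_contra! hlt
    exact not_wmp_of_lt_left hp hq hs hlt h
  · by_contra! hlt
    exact not_wmp_of_lt_right hp hq hs hlt h
end

section
/- Let 1 < p ≤ s ≤ q < ∞. Then for every t > 0, the modulus of asymptotic uniform convexity of ℓ_s ⊕_p ℓ_p and the modulus of asymptotic uniform smoothness of ℓ_s ⊕_q ℓ_q satisfy δ̄_{ℓ_s ⊕_p ℓ_p}(t) = ρ̄_{ℓ_s ⊕_q ℓ_q}(t) = (1 + t^s)^{1/s} − 1. In particular, ρ̄_{ℓ_s ⊕_q ℓ_q}(t) > t − 1 for every t > 1. -/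
/-!
Write `c = (1 + t ^ s) ^ (1 / s)`, and let `r` be the outer exponent (`r = p` or `r = q`).

If `x` and `z` in `ℓ_s ⊕_r ℓ_r` have disjoint supports, then
`‖x + z‖ ^ r = (‖x₁‖ ^ s + ‖z₁‖ ^ s) ^ (r / s) + ‖x₂‖ ^ r + ‖z₂‖ ^ r`. Comparing the mixed norms
`ℓ_r(ℓ_s)` and `ℓ_s(ℓ_r)` on `2 × 2` matrices by Minkowski's inequality, together with the
comparison of the `ℓ_r`- and `ℓ_s`-norms on the second component, gives
`‖x + z‖ ^ s ≥ ‖x‖ ^ s + ‖z‖ ^ s` if `r ≤ s` (`mixed_lower`) and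
`‖x + z‖ ^ s ≤ ‖x‖ ^ s + ‖z‖ ^ s` if `s ≤ r` (`mixed_upper`).

A unit vector `x` is within `ε` of a truncation `x'`, whose supports are disjoint from those of the
elements of a subspace of sequences vanishing on an initial segment; that subspace is closed and of
finite codimension (`exists_truncation`). With `z = t y` for unit vectors `y` in it, this yields
`δ̄(t) ≥ c - 1` and `ρ̄(t) ≤ c - 1`.

Conversely take `x = (e₀, 0)`: every subspace of finite codimension contains a unit vector
`y = (a, 0)` with `a₀ = 0`, and `‖x + t y‖ = c` exactly (`exists_extremal`). Hence equality holds in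
both cases, and `c > t` gives the last assertion.
-/

open Filter Topology

/-- The modulus of asymptotic uniform convexity
`δ̄_E(t) = inf_{x ∈ S_E} sup_F inf_{y ∈ S_F} ‖x + t y‖ − 1`, where `F` runs over the
closed subspaces of `E` of finite codimension. -/
noncomputable def aucModulus (E : Type*) [NormedAddCommGroup E] [NormedSpace ℝ E]
    (t : ℝ) : ℝ :=
  ⨅ x : {x : E // ‖x‖ = 1},
    ⨆ Y : {Y : Submodule ℝ E // IsClosed (Y : Set E) ∧ FiniteDimensional ℝ (E ⧸ Y)},
      (⨅ y : {y : E // y ∈ Y.1 ∧ ‖y‖ = 1}, ‖x.1 + t • y.1‖) - 1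

/-- The modulus of asymptotic uniform smoothness
`ρ̄_E(t) = sup_{x ∈ S_E} inf_F sup_{y ∈ S_F} ‖x + t y‖ − 1`, where `F` runs over the
closed subspaces of `E` of finite codimension. -/
noncomputable def ausModulus (E : Type*) [NormedAddCommGroup E] [NormedSpace ℝ E]
    (t : ℝ) : ℝ :=
  ⨆ x : {x : E // ‖x‖ = 1},
    ⨅ Y : {Y : Submodule ℝ E // IsClosed (Y : Set E) ∧ FiniteDimensional ℝ (E ⧸ Y)},
      (⨆ y : {y : E // y ∈ Y.1 ∧ ‖y‖ = 1}, ‖x.1 + t • y.1‖) - 1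

/-! ### Minkowski inequalities for mixed norms on `ℝ²` -/

lemma minkowski_two {R x₁ x₂ y₁ y₂ : ℝ} (hR : 1 ≤ R) (hx₁ : 0 ≤ x₁) (hx₂ : 0 ≤ x₂)
    (hy₁ : 0 ≤ y₁) (hy₂ : 0 ≤ y₂) :
    ((x₁ + y₁) ^ R + (x₂ + y₂) ^ R) ^ (1 / R)
      ≤ (x₁ ^ R + x₂ ^ R) ^ (1 / R) + (y₁ ^ R + y₂ ^ R) ^ (1 / R) := by
  have h := Real.Lp_add_le_of_nonneg (Finset.univ : Finset (Fin 2)) (f := ![x₁, x₂])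
    (g := ![y₁, y₂]) hR (by intro i _; fin_cases i <;> simpa)
    (by intro i _; fin_cases i <;> simpa)
  simpa [Fin.sum_univ_two] using h

lemma rpow_rpow_div {x s r : ℝ} (hx : 0 ≤ x) (hs : 0 < s) : (x ^ s) ^ (r / s) = x ^ r := by
  rw [← Real.rpow_mul hx, mul_div_cancel₀ _ hs.ne']

/-- The mixed norm `ℓ_q(ℓ_s)` is dominated by the mixed norm `ℓ_s(ℓ_q)` when `s ≤ q`; on the second
row the `ℓ_s`-norm is further replaced by the smaller `ℓ_q`-norm. -/
lemma mixed_upper {s q u v a b W X Z : ℝ} (hs : 0 < s) (hsq : s ≤ q)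
    (hu : 0 ≤ u) (hv : 0 ≤ v) (ha : 0 ≤ a) (hb : 0 ≤ b) (hW0 : 0 ≤ W) (hX0 : 0 ≤ X) (hZ0 : 0 ≤ Z)
    (hW : W ^ q = (u ^ s + a ^ s) ^ (q / s) + (v ^ q + b ^ q))
    (hX : X ^ q = u ^ q + v ^ q) (hZ : Z ^ q = a ^ q + b ^ q) :
    W ^ s ≤ X ^ s + Z ^ s := by
  have hq : 0 < q := hs.trans_le hsq
  have hR : 1 ≤ q / s := (one_le_div hs).2 hsq
  have h1 : v ^ q + b ^ q ≤ (v ^ s + b ^ s) ^ (q / s) := by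
    have := Real.add_rpow_le_rpow_add (Real.rpow_nonneg hv s) (Real.rpow_nonneg hb s) hR
    rwa [rpow_rpow_div hv hs, rpow_rpow_div hb hs] at this
  have h2 := minkowski_two hR (Real.rpow_nonneg hu s) (Real.rpow_nonneg hv s)
    (Real.rpow_nonneg ha s) (Real.rpow_nonneg hb s)
  rw [rpow_rpow_div hu hs, rpow_rpow_div hv hs, rpow_rpow_div ha hs, rpow_rpow_div hb hs,
    ← hX, ← hZ, one_div_div, rpow_rpow_div hX0 hq, rpow_rpow_div hZ0 hq] at h2
  refine le_trans ?_ h2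
  rw [← rpow_rpow_div (r := s) hW0 hq, hW]
  gcongr

/-- The counterpart of `mixed_upper` for `p ≤ s`: there the mixed norm `ℓ_s(ℓ_p)` is dominated by
`ℓ_p(ℓ_s)`. -/
lemma mixed_lower {s p u v a b W X Z : ℝ} (hp : 0 < p) (hps : p ≤ s)
    (hu : 0 ≤ u) (hv : 0 ≤ v) (ha : 0 ≤ a) (hb : 0 ≤ b) (hW0 : 0 ≤ W) (hX0 : 0 ≤ X) (hZ0 : 0 ≤ Z)
    (hW : W ^ p = (u ^ s + a ^ s) ^ (p / s) + (v ^ p + b ^ p))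
    (hX : X ^ p = u ^ p + v ^ p) (hZ : Z ^ p = a ^ p + b ^ p) :
    X ^ s + Z ^ s ≤ W ^ s := by
  have hs : 0 < s := hp.trans_le hps
  have hR : 1 ≤ s / p := (one_le_div hp).2 hps
  have h1 := Real.rpow_add_rpow_le_add (Real.rpow_nonneg hv p) (Real.rpow_nonneg hb p) hR
  have h2 := minkowski_two hR (Real.rpow_nonneg hu p) (Real.rpow_nonneg ha p)
    (Real.rpow_nonneg hv p) (Real.rpow_nonneg hb p)
  rw [← hX, ← hZ, rpow_rpow_div hX0 hp, rpow_rpow_div hZ0 hp, rpow_rpow_div hu hp,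
    rpow_rpow_div ha hp] at h2
  have h3 : (X ^ s + Z ^ s) ^ (p / s) ≤ W ^ p := by
    rw [hW, ← one_div_div s p]
    exact h2.trans (by gcongr)
  have h4 := Real.rpow_le_rpow (by positivity) h3 (by positivity : 0 ≤ s / p)
  rwa [rpow_rpow_div hW0 hp, ← Real.rpow_mul (by positivity), div_mul_div_cancel₀ hs.ne',
    div_self hp.ne', Real.rpow_one] at h4

/-! ### Evaluating the two moduli from approximate optimizers -/

section Moduli

variable {E : Type*} [NormedAddCommGroup E] [NormedSpace ℝ E]

lemma norm_add_smul_le_of_norm_one {t : ℝ} (ht : 0 ≤ t) {x y : E} (hx : ‖x‖ = 1) (hy : ‖y‖ = 1) :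
    ‖x + t • y‖ ≤ 1 + t := by
  have := norm_add_le x (t • y)
  rwa [norm_smul, hx, hy, mul_one, Real.norm_of_nonneg ht] at this

instance nonempty_closedFiniteCodim :
    Nonempty {Y : Submodule ℝ E // IsClosed (Y : Set E) ∧ FiniteDimensional ℝ (E ⧸ Y)} :=
  ⟨⟨⊤, isClosed_univ, inferInstance⟩⟩

lemma aucModulus_eq {t c : ℝ} (ht : 0 ≤ t)
    (hup : ∃ x : E, ‖x‖ = 1 ∧ ∀ Y : Submodule ℝ E, FiniteDimensional ℝ (E ⧸ Y) →
      ∃ y ∈ Y, ‖y‖ = 1 ∧ ‖x + t • y‖ = c)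
    (hlow : ∀ x : E, ‖x‖ = 1 → ∀ ε > 0, ∃ Y : Submodule ℝ E,
      (IsClosed (Y : Set E) ∧ FiniteDimensional ℝ (E ⧸ Y)) ∧
        ∀ y ∈ Y, ‖y‖ = 1 → c - ε ≤ ‖x + t • y‖) :
    aucModulus E t = c - 1 := by
  obtain ⟨x₀, hx₀, hY₀⟩ := hup
  have hne (Y : Submodule ℝ E) (hY : FiniteDimensional ℝ (E ⧸ Y)) :
      Nonempty {y : E // y ∈ Y ∧ ‖y‖ = 1} := by
    obtain ⟨y, hy, hy1, -⟩ := hY₀ Y hY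
    exact ⟨⟨y, hy, hy1⟩⟩
  have hbelow (x : E) (Y : Submodule ℝ E) :
      BddBelow (Set.range fun y : {y : E // y ∈ Y ∧ ‖y‖ = 1} => ‖x + t • y.1‖) :=
    ⟨0, by rintro _ ⟨y, rfl⟩; exact norm_nonneg _⟩
  have habove (x : E) (hx : ‖x‖ = 1) : BddAbove (Set.range
      fun Y : {Y : Submodule ℝ E // IsClosed (Y : Set E) ∧ FiniteDimensional ℝ (E ⧸ Y)} =>
        (⨅ y : {y : E // y ∈ Y.1 ∧ ‖y‖ = 1}, ‖x + t • y.1‖) - 1) := by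
    refine ⟨t, ?_⟩
    rintro _ ⟨Y, rfl⟩
    obtain ⟨y⟩ := hne Y.1 Y.2.2
    have h1 := ciInf_le (hbelow x Y.1) y
    have h2 := norm_add_smul_le_of_norm_one ht hx y.2.2
    dsimp only at h1 ⊢
    linarith
  have : Nonempty {x : E // ‖x‖ = 1} := ⟨⟨x₀, hx₀⟩⟩
  apply le_antisymm
  · refine (ciInf_le ⟨-1, ?_⟩ ⟨x₀, hx₀⟩).trans (ciSup_le fun Y => ?_)
    · rintro _ ⟨x, rfl⟩
      refine le_trans ?_ (le_ciSup (habove x.1 x.2) (Classical.arbitrary _))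
      have := Real.iInf_nonneg (fun y : {y : E // y ∈
        (Classical.arbitrary {Y : Submodule ℝ E // IsClosed (Y : Set E) ∧
          FiniteDimensional ℝ (E ⧸ Y)}).1 ∧ ‖y‖ = 1} => norm_nonneg (x.1 + t • y.1))
      linarith
    · obtain ⟨y, hy, hy1, hyc⟩ := hY₀ Y.1 Y.2.2
      have := ciInf_le (hbelow x₀ Y.1) ⟨y, hy, hy1⟩
      dsimp only at this ⊢
      linarith
  · refine le_ciInf fun x => le_of_forall_pos_sub_le fun ε hε => ?_
    obtain ⟨Y, hY, h⟩ := hlow x.1 x.2 ε hε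
    refine le_trans ?_ (le_ciSup (habove x.1 x.2) ⟨Y, hY⟩)
    have := hne Y hY.2
    have := le_ciInf fun y : {y : E // y ∈ Y ∧ ‖y‖ = 1} => h y.1 y.2.1 y.2.2
    dsimp only
    linarith

lemma ausModulus_eq {t c : ℝ} (ht : 0 ≤ t)
    (hlow : ∃ x : E, ‖x‖ = 1 ∧ ∀ Y : Submodule ℝ E, FiniteDimensional ℝ (E ⧸ Y) →
      ∃ y ∈ Y, ‖y‖ = 1 ∧ ‖x + t • y‖ = c)
    (hup : ∀ x : E, ‖x‖ = 1 → ∀ ε > 0, ∃ Y : Submodule ℝ E,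
      (IsClosed (Y : Set E) ∧ FiniteDimensional ℝ (E ⧸ Y)) ∧
        ∀ y ∈ Y, ‖y‖ = 1 → ‖x + t • y‖ ≤ c + ε) :
    ausModulus E t = c - 1 := by
  obtain ⟨x₀, hx₀, hY₀⟩ := hlow
  have hne (Y : Submodule ℝ E) (hY : FiniteDimensional ℝ (E ⧸ Y)) :
      Nonempty {y : E // y ∈ Y ∧ ‖y‖ = 1} := by
    obtain ⟨y, hy, hy1, -⟩ := hY₀ Y hY
    exact ⟨⟨y, hy, hy1⟩⟩
  have habove (x : E) (hx : ‖x‖ = 1) (Y : Submodule ℝ E) :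
      BddAbove (Set.range fun y : {y : E // y ∈ Y ∧ ‖y‖ = 1} => ‖x + t • y.1‖) :=
    ⟨1 + t, by rintro _ ⟨y, rfl⟩; exact norm_add_smul_le_of_norm_one ht hx y.2.2⟩
  have hbelow (x : E) : BddBelow (Set.range
      fun Y : {Y : Submodule ℝ E // IsClosed (Y : Set E) ∧ FiniteDimensional ℝ (E ⧸ Y)} =>
        (⨆ y : {y : E // y ∈ Y.1 ∧ ‖y‖ = 1}, ‖x + t • y.1‖) - 1) := by
    refine ⟨-1, ?_⟩
    rintro _ ⟨Y, rfl⟩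
    have := Real.iSup_nonneg
      (fun y : {y : E // y ∈ Y.1 ∧ ‖y‖ = 1} => norm_nonneg (x + t • y.1))
    dsimp only
    linarith
  have : Nonempty {x : E // ‖x‖ = 1} := ⟨⟨x₀, hx₀⟩⟩
  apply le_antisymm
  · refine ciSup_le fun x => le_of_forall_pos_le_add fun ε hε => ?_
    obtain ⟨Y, hY, h⟩ := hup x.1 x.2 ε hε
    refine (ciInf_le (hbelow x.1) ⟨Y, hY⟩).trans ?_
    have := hne Y hY.2
    have := ciSup_le fun y : {y : E // y ∈ Y ∧ ‖y‖ = 1} => h y.1 y.2.1 y.2.2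
    dsimp only
    linarith
  · unfold ausModulus
    refine le_trans ?_ (le_ciSup ⟨t, ?_⟩ ⟨x₀, hx₀⟩)
    · refine le_ciInf fun Y => ?_
      obtain ⟨y, hy, hy1, hyc⟩ := hY₀ Y.1 Y.2.2
      have := le_ciSup (habove x₀ hx₀ Y.1) ⟨y, hy, hy1⟩
      dsimp only at this ⊢
      linarith
    · rintro _ ⟨x, rfl⟩
      refine (ciInf_le (hbelow x.1) (Classical.arbitrary _)).trans ?_
      have := Real.iSup_le (fun y : {y : E // y ∈
        (Classical.arbitrary {Y : Submodule ℝ E // IsClosed (Y : Set E) ∧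
          FiniteDimensional ℝ (E ⧸ Y)}).1 ∧ ‖y‖ = 1} =>
            norm_add_smul_le_of_norm_one ht x.2 y.2.2) (by linarith)
      linarith

end Moduli

/-! ### Disjoint supports and tails in `ℓ_s ⊕_r ℓ_r` -/

section Tails

variable {r s : ℝ}

lemma norm_rpow_add_of_disjoint (hs : 0 < s) (f g : ellSeq s) (h : ∀ i, f i = 0 ∨ g i = 0) :
    ‖f + g‖ ^ s = ‖f‖ ^ s + ‖g‖ ^ s := by
  have hs' : (ENNReal.ofReal s).toReal = s := ENNReal.toReal_ofReal hs.le
  have hpos : 0 < (ENNReal.ofReal s).toReal := by rwa [hs']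
  have hf := lp.hasSum_norm hpos f
  have hg := lp.hasSum_norm hpos g
  have hfg := lp.hasSum_norm hpos (f + g)
  rw [hs'] at hf hg hfg
  refine hfg.unique ((hf.add hg).congr_fun ?_)
  intro i
  rcases h i with h | h <;> simp [h, Real.zero_rpow hs.ne']

/-- Both components of `x` and `z` have disjoint supports. -/
def DisjointSupports (x z : WithLp (ENNReal.ofReal r) (ellSeq s × ellSeq r)) : Prop :=
  (∀ i, x.fst i = 0 ∨ z.fst i = 0) ∧ ∀ i, x.snd i = 0 ∨ z.snd i = 0

lemma DisjointSupports.smul {x z : WithLp (ENNReal.ofReal r) (ellSeq s × ellSeq r)}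
    (h : DisjointSupports x z) (t : ℝ) : DisjointSupports x (t • z) := by
  refine ⟨fun i => (h.1 i).imp id fun h => ?_, fun i => (h.2 i).imp id fun h => ?_⟩ <;> simp [h]

lemma truncation_apply (a : ellSeq s) {N i : ℕ} (h : N ≤ i) :
    (∑ j ∈ Finset.range N, lp.single (ENNReal.ofReal s) j (a j) : ellSeq s) i = 0 := by
  rw [lp.coeFn_sum, Finset.sum_apply]
  refine Finset.sum_eq_zero fun j hj => lp.single_apply_ne _ _ _ ?_
  have := Finset.mem_range.1 hj
  omega

variable [Fact (1 ≤ ENNReal.ofReal s)]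

/-- A subspace of finite codimension contains a unit vector `(a, 0)` with `a` supported off the
coordinate `0`, because such vectors form an infinite-dimensional space. -/
lemma exists_unit_fst (Y : Submodule ℝ (WithLp (ENNReal.ofReal r) (ellSeq s × ellSeq r)))
    (hY : FiniteDimensional ℝ (WithLp (ENNReal.ofReal r) (ellSeq s × ellSeq r) ⧸ Y)) :
    ∃ a : ellSeq s, a 0 = 0 ∧ ‖a‖ = 1 ∧ WithLp.toLp (ENNReal.ofReal r) (a, (0 : ellSeq r)) ∈ Y := by
  let T : (ℕ →₀ ℝ) →ₗ[ℝ] ellSeq s :=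
    Finsupp.linearCombination ℝ fun n => lp.single (ENNReal.ofReal s) (n + 1) (1 : ℝ)
  have hT0 (f : ℕ →₀ ℝ) : T f 0 = 0 := by
    induction f using Finsupp.induction_linear with
    | zero => simp
    | add f g hf hg => simp [hf, hg]
    | single n c => simp [T]
  have hTS (f : ℕ →₀ ℝ) (k : ℕ) : T f (k + 1) = f k := by
    induction f using Finsupp.induction_linear with
    | zero => simp
    | add f g hf hg => simp [hf, hg]
    | single n c => simp [T, Pi.single_apply, Finsupp.single_apply, eq_comm]
  let J : ellSeq s →ₗ[ℝ] WithLp (ENNReal.ofReal r) (ellSeq s × ellSeq r) :=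
    (WithLp.linearEquiv (ENNReal.ofReal r) ℝ (ellSeq s × ellSeq r)).symm.toLinearMap ∘ₗ
      LinearMap.inl ℝ (ellSeq s) (ellSeq r)
  have hninj : ¬ Function.Injective (Y.mkQ ∘ₗ J ∘ₗ T) := fun hinj =>
    have := FiniteDimensional.of_injective _ hinj
    have := Module.Finite.finite_basis (Finsupp.basisSingleOne (R := ℝ) (ι := ℕ))
    not_finite ℕ
  rw [← LinearMap.ker_eq_bot, Submodule.eq_bot_iff] at hninj
  push Not at hninj
  obtain ⟨f, hf, hf0⟩ := hninj
  have hTf : T f ≠ 0 := fun h => hf0 (Finsupp.ext fun k => by rw [← hTS f k, h]; simp)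
  have hmem : J (T f) ∈ Y := by simpa using hf
  refine ⟨‖T f‖⁻¹ • T f, by simp [hT0], norm_smul_inv_norm hTf, ?_⟩
  have := Y.smul_mem ‖T f‖⁻¹ hmem
  rw [← map_smul] at this
  exact this

variable [Fact (1 ≤ ENNReal.ofReal r)]

lemma prod_norm_rpow (hr : 0 < r) (x : WithLp (ENNReal.ofReal r) (ellSeq s × ellSeq r)) :
    ‖x‖ ^ r = ‖x.fst‖ ^ r + ‖x.snd‖ ^ r := by
  have hr' : (ENNReal.ofReal r).toReal = r := ENNReal.toReal_ofReal hr.le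
  rw [WithLp.prod_norm_eq_add (by rwa [hr']), hr', one_div, Real.rpow_inv_rpow (by positivity) hr.ne']

lemma DisjointSupports.norm_add_rpow (hr : 0 < r) (hs : 0 < s)
    {x z : WithLp (ENNReal.ofReal r) (ellSeq s × ellSeq r)} (h : DisjointSupports x z) :
    ‖x + z‖ ^ r =
      (‖x.fst‖ ^ s + ‖z.fst‖ ^ s) ^ (r / s) + (‖x.snd‖ ^ r + ‖z.snd‖ ^ r) := by
  rw [prod_norm_rpow hr, WithLp.add_fst, WithLp.add_snd, norm_rpow_add_of_disjoint hr _ _ h.2,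
    ← rpow_rpow_div (r := r) (norm_nonneg (x.fst + z.fst)) hs, norm_rpow_add_of_disjoint hs _ _ h.1]

lemma DisjointSupports.norm_rpow_le (hs : 0 < s) (hsr : s ≤ r)
    {x z : WithLp (ENNReal.ofReal r) (ellSeq s × ellSeq r)} (h : DisjointSupports x z) :
    ‖x + z‖ ^ s ≤ ‖x‖ ^ s + ‖z‖ ^ s :=
  have hr := hs.trans_le hsr
  mixed_upper hs hsr (norm_nonneg _) (norm_nonneg _) (norm_nonneg _) (norm_nonneg _)
    (norm_nonneg _) (norm_nonneg _) (norm_nonneg _) (h.norm_add_rpow hr hs)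
    (prod_norm_rpow hr x) (prod_norm_rpow hr z)

lemma DisjointSupports.le_norm_rpow (hr : 0 < r) (hrs : r ≤ s)
    {x z : WithLp (ENNReal.ofReal r) (ellSeq s × ellSeq r)} (h : DisjointSupports x z) :
    ‖x‖ ^ s + ‖z‖ ^ s ≤ ‖x + z‖ ^ s :=
  have hs := hr.trans_le hrs
  mixed_lower hr hrs (norm_nonneg _) (norm_nonneg _) (norm_nonneg _) (norm_nonneg _)
    (norm_nonneg _) (norm_nonneg _) (norm_nonneg _) (h.norm_add_rpow hr hs)
    (prod_norm_rpow hr x) (prod_norm_rpow hr z)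

/-- The coordinate functional `a ↦ a i` on `ℓ_s`. -/
noncomputable def coordCLM (s : ℝ) [Fact (1 ≤ ENNReal.ofReal s)] (i : ℕ) : ellSeq s →L[ℝ] ℝ :=
  lp.evalCLM ℝ (fun _ : ℕ => ℝ) (ENNReal.ofReal s) i

lemma coordCLM_apply (i : ℕ) (a : ellSeq s) : coordCLM s i a = a i := rfl

/-- The first `N` coordinates of both components. -/
noncomputable def headCLM (r s : ℝ) [Fact (1 ≤ ENNReal.ofReal r)] [Fact (1 ≤ ENNReal.ofReal s)]
    (N : ℕ) :
    WithLp (ENNReal.ofReal r) (ellSeq s × ellSeq r) →L[ℝ] (Fin N → ℝ) × (Fin N → ℝ) :=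
  (ContinuousLinearMap.pi fun i : Fin N =>
      (coordCLM s i).comp (WithLp.fstL (ENNReal.ofReal r) ℝ (ellSeq s) (ellSeq r))).prod
    (ContinuousLinearMap.pi fun i : Fin N =>
      (coordCLM r i).comp (WithLp.sndL (ENNReal.ofReal r) ℝ (ellSeq s) (ellSeq r)))

lemma tendsto_truncation (a : ellSeq s) :
    Tendsto (fun N => ∑ i ∈ Finset.range N, lp.single (ENNReal.ofReal s) i (a i)) atTop (𝓝 a) :=
  (lp.hasSum_single ENNReal.ofReal_ne_top a).tendsto_sum_nat

/-- Every `x` is approximated by a finitely supported `x'`, and `x'` has supports disjoint from every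
element of a suitable closed subspace of finite codimension. -/
lemma exists_truncation (x : WithLp (ENNReal.ofReal r) (ellSeq s × ellSeq r)) {ε : ℝ}
    (hε : 0 < ε) :
    ∃ x' : WithLp (ENNReal.ofReal r) (ellSeq s × ellSeq r), ‖x - x'‖ < ε ∧
      ∃ Y : Submodule ℝ (WithLp (ENNReal.ofReal r) (ellSeq s × ellSeq r)),
        (IsClosed (Y : Set (WithLp (ENNReal.ofReal r) (ellSeq s × ellSeq r))) ∧
          FiniteDimensional ℝ (WithLp (ENNReal.ofReal r) (ellSeq s × ellSeq r) ⧸ Y)) ∧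
        ∀ y ∈ Y, DisjointSupports x' y := by
  have hlim := ((WithLp.prod_continuous_toLp (ENNReal.ofReal r) (ellSeq s) (ellSeq r)).tendsto
    (x.fst, x.snd)).comp
      ((tendsto_truncation x.fst).prodMk_nhds (tendsto_truncation x.snd))
  obtain ⟨N, hN⟩ := (hlim.eventually (Metric.ball_mem_nhds _ hε)).exists
  refine ⟨WithLp.toLp _ (∑ i ∈ Finset.range N, lp.single (ENNReal.ofReal s) i (x.fst i),
    ∑ i ∈ Finset.range N, lp.single (ENNReal.ofReal r) i (x.snd i)), ?_,
    (headCLM r s N).toLinearMap.ker, ⟨(headCLM r s N).isClosed_ker, ?_⟩, ?_⟩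
  · rw [← dist_eq_norm, dist_comm]
    exact hN
  · exact FiniteDimensional.of_injective _
      (headCLM r s N).toLinearMap.quotKerEquivRange.injective
  · intro y hy
    have hy0 : headCLM r s N y = 0 := hy
    refine ⟨fun i => ?_, fun i => ?_⟩
    · rcases lt_or_ge i N with hi | hi
      · exact Or.inr (congrFun (congrArg Prod.fst hy0) ⟨i, hi⟩)
      · exact Or.inl (truncation_apply x.fst hi)
    · rcases lt_or_ge i N with hi | hi
      · exact Or.inr (congrFun (congrArg Prod.snd hy0) ⟨i, hi⟩)
      · exact Or.inl (truncation_apply x.snd hi)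

/-- The vector `(e₀, 0)` is extremal for both moduli: every subspace of finite codimension contains
a unit vector `y` with `‖(e₀, 0) + t y‖ = (1 + t ^ s) ^ (1 / s)`. -/
lemma exists_extremal (hs : 0 < s) {t : ℝ} (ht : 0 ≤ t) :
    ∃ x : WithLp (ENNReal.ofReal r) (ellSeq s × ellSeq r), ‖x‖ = 1 ∧
      ∀ Y : Submodule ℝ (WithLp (ENNReal.ofReal r) (ellSeq s × ellSeq r)),
        FiniteDimensional ℝ (WithLp (ENNReal.ofReal r) (ellSeq s × ellSeq r) ⧸ Y) →
          ∃ y ∈ Y, ‖y‖ = 1 ∧ ‖x + t • y‖ = (1 + t ^ s) ^ (1 / s) := by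
  have he : ‖(lp.single (ENNReal.ofReal s) 0 (1 : ℝ) : ellSeq s)‖ = 1 := by
    rw [lp.norm_single (by simpa using hs), norm_one]
  refine ⟨WithLp.toLp _ (lp.single (ENNReal.ofReal s) 0 (1 : ℝ), 0), ?_, fun Y hY => ?_⟩
  · rw [WithLp.norm_toLp_fst, he]
  · obtain ⟨a, ha0, ha1, haY⟩ := exists_unit_fst Y hY
    refine ⟨_, haY, by rw [WithLp.norm_toLp_fst, ha1], ?_⟩
    have hsum : WithLp.toLp (ENNReal.ofReal r)
          ((lp.single (ENNReal.ofReal s) 0 (1 : ℝ) : ellSeq s), (0 : ellSeq r))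
        + t • WithLp.toLp (ENNReal.ofReal r) (a, (0 : ellSeq r))
        = WithLp.toLp (ENNReal.ofReal r)
            ((lp.single (ENNReal.ofReal s) 0 (1 : ℝ) : ellSeq s) + t • a, (0 : ellSeq r)) := by
      rw [← WithLp.toLp_smul, ← WithLp.toLp_add]
      simp
    rw [hsum, WithLp.norm_toLp_fst]
    have h := norm_rpow_add_of_disjoint hs (lp.single (ENNReal.ofReal s) 0 (1 : ℝ)) (t • a)
      (fun i => by
        rcases eq_or_ne i 0 with rfl | hi
        · right; simp [ha0]
        · left; exact lp.single_apply_ne _ _ _ hi)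
    rw [he, norm_smul, ha1, mul_one, Real.norm_of_nonneg ht, Real.one_rpow] at h
    rw [← h, one_div, Real.rpow_rpow_inv (norm_nonneg _) hs.ne']

end Tails

/-! ### Conclusion -/

lemma one_add_rpow_root_rpow {s t : ℝ} (hs : 0 < s) (ht : 0 ≤ t) :
    ((1 + t ^ s) ^ (1 / s)) ^ s = 1 + t ^ s := by
  rw [one_div, Real.rpow_inv_rpow (by positivity) hs.ne']

/-- Homogeneity replaces continuity of `m ↦ (m ^ s + t ^ s) ^ (1 / s)` near `m = 1`. -/
lemma le_of_rpow_le_add {s t m w : ℝ} (hs : 0 < s) (ht : 0 ≤ t) (hm : 0 ≤ m)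
    (h : w ^ s ≤ m ^ s + t ^ s) : w ≤ max m 1 * (1 + t ^ s) ^ (1 / s) := by
  have hm1 : 0 ≤ max m 1 := hm.trans (le_max_left _ _)
  refine le_of_not_gt fun hlt => ?_
  have h1 := Real.rpow_lt_rpow (by positivity) hlt hs
  rw [Real.mul_rpow hm1 (by positivity), one_add_rpow_root_rpow hs ht] at h1
  have h2 : m ^ s ≤ max m 1 ^ s := Real.rpow_le_rpow hm (le_max_left _ _) hs.le
  have h3 : 1 ≤ max m 1 ^ s := Real.one_le_rpow (le_max_right _ _) hs.le
  nlinarith [Real.rpow_nonneg ht s]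

lemma le_of_add_le_rpow {s t m w : ℝ} (hs : 0 < s) (ht : 0 ≤ t) (hm : 0 ≤ m) (hw : 0 ≤ w)
    (h : m ^ s + t ^ s ≤ w ^ s) : min m 1 * (1 + t ^ s) ^ (1 / s) ≤ w := by
  have hm1 : 0 ≤ min m 1 := le_min hm zero_le_one
  refine le_of_not_gt fun hlt => ?_
  have h1 := Real.rpow_lt_rpow hw hlt hs
  rw [Real.mul_rpow hm1 (by positivity), one_add_rpow_root_rpow hs ht] at h1
  have h2 : min m 1 ^ s ≤ m ^ s := Real.rpow_le_rpow hm1 (min_le_left _ _) hs.le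
  have h3 : min m 1 ^ s ≤ 1 := Real.rpow_le_one hm1 (min_le_right _ _) hs.le
  nlinarith [Real.rpow_nonneg ht s]

lemma aucModulus_ellSeq {p s t : ℝ} (hp : 0 < p) (hps : p ≤ s) (ht : 0 ≤ t)
    [Fact (1 ≤ ENNReal.ofReal p)] [Fact (1 ≤ ENNReal.ofReal s)] :
    aucModulus (WithLp (ENNReal.ofReal p) (ellSeq s × ellSeq p)) t
      = (1 + t ^ s) ^ (1 / s) - 1 := by
  have hs : 0 < s := hp.trans_le hps
  refine aucModulus_eq ht (exists_extremal hs ht) fun x hx ε hε => ?_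
  set c := (1 + t ^ s) ^ (1 / s)
  have hc : 0 ≤ c := by positivity
  obtain ⟨x', hx', Y, hY, hdisj⟩ := exists_truncation x (ε := ε / (1 + c)) (by positivity)
  refine ⟨Y, hY, fun y hy hy1 => ?_⟩
  have h1 := ((hdisj y hy).smul t).le_norm_rpow hp hps
  rw [norm_smul, hy1, mul_one, Real.norm_of_nonneg ht] at h1
  have h2 := le_of_add_le_rpow hs ht (norm_nonneg _) (norm_nonneg _) h1
  have h3 : 1 - ε / (1 + c) ≤ min ‖x'‖ 1 := by
    have h4 := norm_sub_norm_le x x'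
    have h5 : 0 ≤ ε / (1 + c) := by positivity
    exact le_min (by linarith) (by linarith)
  have h4 : ‖x' + t • y‖ - ‖x + t • y‖ ≤ ‖x - x'‖ := by
    refine (norm_sub_norm_le _ _).trans_eq ?_
    rw [add_sub_add_right_eq_sub, norm_sub_rev]
  have h5 := mul_le_mul_of_nonneg_right h3 hc
  have h6 : ε / (1 + c) * (1 + c) = ε := div_mul_cancel₀ _ (by positivity)
  nlinarith

lemma ausModulus_ellSeq {q s t : ℝ} (hs : 0 < s) (hsq : s ≤ q) (ht : 0 ≤ t)
    [Fact (1 ≤ ENNReal.ofReal q)] [Fact (1 ≤ ENNReal.ofReal s)] :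
    ausModulus (WithLp (ENNReal.ofReal q) (ellSeq s × ellSeq q)) t
      = (1 + t ^ s) ^ (1 / s) - 1 := by
  refine ausModulus_eq ht (exists_extremal hs ht) fun x hx ε hε => ?_
  set c := (1 + t ^ s) ^ (1 / s)
  have hc : 0 ≤ c := by positivity
  obtain ⟨x', hx', Y, hY, hdisj⟩ := exists_truncation x (ε := ε / (1 + c)) (by positivity)
  refine ⟨Y, hY, fun y hy hy1 => ?_⟩
  have h1 := ((hdisj y hy).smul t).norm_rpow_le hs hsq
  rw [norm_smul, hy1, mul_one, Real.norm_of_nonneg ht] at h1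
  have h2 := le_of_rpow_le_add hs ht (norm_nonneg _) h1
  have h3 : max ‖x'‖ 1 ≤ 1 + ε / (1 + c) := by
    have h4 := norm_sub_norm_le x' x
    rw [norm_sub_rev] at h4
    have h5 : 0 ≤ ε / (1 + c) := by positivity
    exact max_le (by linarith) (by linarith)
  have h4 : ‖x + t • y‖ - ‖x' + t • y‖ ≤ ‖x - x'‖ := by
    refine (norm_sub_norm_le _ _).trans_eq ?_
    rw [add_sub_add_right_eq_sub]
  have h5 := mul_le_mul_of_nonneg_right h3 hc
  have h6 : ε / (1 + c) * (1 + c) = ε := div_mul_cancel₀ _ (by positivity)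
  nlinarith

theorem statement17 (p q s : ℝ) (hp : 1 < p) (hps : p ≤ s) (hsq : s ≤ q)
    [Fact (1 ≤ ENNReal.ofReal p)] [Fact (1 ≤ ENNReal.ofReal q)]
    [Fact (1 ≤ ENNReal.ofReal s)] :
    (∀ t : ℝ, 0 < t →
      aucModulus (WithLp (ENNReal.ofReal p) (ellSeq s × ellSeq p)) t
          = (1 + t ^ s) ^ (1 / s) - 1 ∧
      ausModulus (WithLp (ENNReal.ofReal q) (ellSeq s × ellSeq q)) t
          = (1 + t ^ s) ^ (1 / s) - 1) ∧
    (∀ t : ℝ, 1 < t →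
      t - 1 < ausModulus (WithLp (ENNReal.ofReal q) (ellSeq s × ellSeq q)) t) := by
  have hs : 0 < s := by linarith
  refine ⟨fun t ht => ⟨aucModulus_ellSeq (by linarith) hps ht.le,
    ausModulus_ellSeq hs hsq ht.le⟩, fun t ht => ?_⟩
  have ht0 : 0 ≤ t := by linarith
  rw [ausModulus_ellSeq hs hsq ht0]
  have h : (t ^ s) ^ (1 / s) < (1 + t ^ s) ^ (1 / s) :=
    Real.rpow_lt_rpow (by positivity) (by linarith) (by positivity)
  rw [one_div, Real.rpow_rpow_inv ht0 hs.ne', ← one_div] at h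
  linarith
end
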